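/- arXiv:1906.11073 — 6 statements merged into one kernel-verified Lean document; each statement's English description precedes it below -/
import Mathlib

section
/- Theorem 1.5. Let α ∈ (0,1), d₁, d₂ > 0 and c₁, c₂ ∈ ℝ. Let u₀, v₀ : ℝ → ℝ be bounded, α-Hölder continuous functions with u₀(x) ≥ 0 and v₀(x) ≥ 0 for all x ∈ ℝ, not both identically zero. Then for every classical solution (u,v) on ℝ × [0,T), T ∈ (0,∞], of the system u_t = d₁ u_xx + c₁ u_x + v², v_t = d₂ v_xx + c₂ v_x + u² with initial data (u₀, v₀), there exists a constant c > 0 such that for all t ∈ [0,T): sup_{x∈ℝ}(|u(x,t)| + |v(x,t)|) ≥ c·log(1+t) and ∫_ℝ (|u(x,t)| + |v(x,t)|) dx ≥ c·t. -/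
open MeasureTheory Set

noncomputable section

/-- `f` is `α`-Hölder continuous. -/
def HolderCont (α : ℝ) (f : ℝ → ℝ) : Prop :=
  ∃ C : ℝ, ∀ x y : ℝ, |f x - f y| ≤ C * |x - y| ^ α

/-- `h : ℝ² → ℝ` is `C^{2,α}`: twice continuously differentiable with `α`-Hölder
continuous second-order derivatives. -/
def IsC2Holder (α : ℝ) (h : ℝ × ℝ → ℝ) : Prop :=
  ContDiff ℝ 2 h ∧
    ∃ C : ℝ, ∀ x y : ℝ × ℝ,
      ‖iteratedFDeriv ℝ 2 h x - iteratedFDeriv ℝ 2 h y‖ ≤ C * ‖x - y‖ ^ α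

/-- A classical solution of the reaction-diffusion-advection system (GRD)
`u_t = d₁ u_xx + c₁ u_x + f₁(u,v) + ∂_x(g₁(u,v))`,
`v_t = d₂ v_xx + c₂ v_x + f₂(u,v) + ∂_x(g₂(u,v))`
on `ℝ × [0,T)` with initial data `(u₀, v₀)`: jointly continuous, bounded in `x` on
each compact time interval, once continuously differentiable in `t` and twice
continuously differentiable in `x` on `ℝ × (0,T)`, satisfying both equations
pointwise there, and attaining the initial data at `t = 0`. -/
def IsClassicalSolution (d₁ d₂ c₁ c₂ : ℝ) (f₁ f₂ g₁ g₂ : ℝ × ℝ → ℝ)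
    (T : ENNReal) (u₀ v₀ : ℝ → ℝ) (u v : ℝ → ℝ → ℝ) : Prop :=
  (∀ x : ℝ, u x 0 = u₀ x) ∧ (∀ x : ℝ, v x 0 = v₀ x) ∧
  ContinuousOn (fun p : ℝ × ℝ => (u p.1 p.2, v p.1 p.2))
    {p : ℝ × ℝ | 0 ≤ p.2 ∧ ENNReal.ofReal p.2 < T} ∧
  (∀ t₁ : ℝ, 0 ≤ t₁ → ENNReal.ofReal t₁ < T →
    ∃ K : ℝ, ∀ x t : ℝ, 0 ≤ t → t ≤ t₁ → |u x t| + |v x t| ≤ K) ∧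
  ∃ ut vt ux vx uxx vxx gx hx : ℝ → ℝ → ℝ,
    (∀ x t : ℝ, 0 < t → ENNReal.ofReal t < T →
      HasDerivAt (fun τ => u x τ) (ut x t) t ∧
      HasDerivAt (fun ξ => u ξ t) (ux x t) x ∧
      HasDerivAt (fun ξ => ux ξ t) (uxx x t) x ∧
      HasDerivAt (fun ξ => g₁ (u ξ t, v ξ t)) (gx x t) x ∧
      HasDerivAt (fun τ => v x τ) (vt x t) t ∧
      HasDerivAt (fun ξ => v ξ t) (vx x t) x ∧
      HasDerivAt (fun ξ => vx ξ t) (vxx x t) x ∧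
      HasDerivAt (fun ξ => g₂ (u ξ t, v ξ t)) (hx x t) x ∧
      ut x t = d₁ * uxx x t + c₁ * ux x t + f₁ (u x t, v x t) + gx x t ∧
      vt x t = d₂ * vxx x t + c₂ * vx x t + f₂ (u x t, v x t) + hx x t) ∧
    ContinuousOn (fun p : ℝ × ℝ =>
        (ut p.1 p.2, ux p.1 p.2, uxx p.1 p.2, vt p.1 p.2, vx p.1 p.2, vxx p.1 p.2))
      {p : ℝ × ℝ | 0 < p.2 ∧ ENNReal.ofReal p.2 < T}


lemma second_deriv_nonneg {f f' : ℝ → ℝ} {x f2 : ℝ} (h1 : ∀ᶠ y in nhds x, HasDerivAt f (f' y) y)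
    (h2 : HasDerivAt f' f2 x) (hm : IsLocalMin f x) : 0 ≤ f2 := by
  by_contra hneg
  push Not at hneg
  have e1 : deriv f =ᶠ[nhds x] f' := h1.mono fun y hy => hy.deriv
  have e2 : deriv (deriv f) x = f2 := by rw [e1.deriv_eq, h2.deriv]
  have hM : IsLocalMax f x := isLocalMax_of_deriv_deriv_neg (by rw [e2]; exact hneg) hm.deriv_eq_zero
    h1.self_of_nhds.continuousAt
  have hc : f =ᶠ[nhds x] fun _ => f x := by
    filter_upwards [hm, hM] with y hy hy'
    exact le_antisymm hy' hy
  have h3 : deriv f =ᶠ[nhds x] fun _ => 0 := by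
    have := hc.deriv
    simpa using this
  have : deriv (deriv f) x = 0 := by rw [h3.deriv_eq]; simp
  linarith

lemma left_deriv_nonpos {f : ℝ → ℝ} {a t f1 : ℝ} (hat : a < t) (h1 : HasDerivAt f f1 t)
    (hm : ∀ s ∈ Icc a t, f t ≤ f s) : f1 ≤ 0 := by
  have h := (hasDerivWithinAt_iff_tendsto_slope' (s := Iio t) (by simp)).1 h1.hasDerivWithinAt
  refine le_of_tendsto h ?_
  filter_upwards [Ioo_mem_nhdsLT hat] with s hs
  rw [slope_def_field]
  exact div_nonpos_of_nonneg_of_nonpos (by linarith [hm s ⟨hs.1.le, hs.2.le⟩]) (by linarith [hs.2])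

/-- rectangle minimum principle -/
lemma rect_mp {d a b s0 t0 : ℝ} (hd : 0 < d) {F Ft Fy Fyy : ℝ → ℝ → ℝ}
    (hc : ContinuousOn (fun p : ℝ × ℝ => F p.1 p.2) (Icc a b ×ˢ Icc s0 t0))
    (hD : ∀ y t, a < y → y < b → s0 < t → t ≤ t0 → HasDerivAt (fun τ => F y τ) (Ft y t) t ∧
      HasDerivAt (fun ξ => F ξ t) (Fy y t) y ∧ HasDerivAt (fun ξ => Fy ξ t) (Fyy y t) y ∧
      d * Fyy y t ≤ Ft y t)
    (hi : ∀ y ∈ Icc a b, 0 ≤ F y s0)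
    (ha : ∀ t ∈ Icc s0 t0, 0 ≤ F a t) (hb : ∀ t ∈ Icc s0 t0, 0 ≤ F b t) :
    ∀ y ∈ Icc a b, ∀ t ∈ Icc s0 t0, 0 ≤ F y t := by
  have key : ∀ η : ℝ, 0 < η → ∀ y ∈ Icc a b, ∀ t ∈ Icc s0 t0, 0 ≤ F y t + η * (t - s0) := by
    intro η hη y hy t ht
    have hne : (Icc a b ×ˢ Icc s0 t0).Nonempty := ⟨(y, t), hy, ht⟩
    obtain ⟨⟨p, q⟩, ⟨hp, hq⟩, hmin⟩ := (isCompact_Icc.prod isCompact_Icc).exists_isMinOn hne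
      (f := fun p : ℝ × ℝ => F p.1 p.2 + η * (p.2 - s0)) (hc.add (by fun_prop))
    simp only at hp hq
    have hmin' : ∀ y ∈ Icc a b, ∀ t ∈ Icc s0 t0, F p q + η * (q - s0) ≤ F y t + η * (t - s0) :=
      fun y hy t ht => hmin (show (y, t) ∈ _ from ⟨hy, ht⟩)
    refine le_trans ?_ (hmin' y hy t ht)
    rcases hq.1.eq_or_lt with h | hq1
    · subst h; simpa using hi p hp
    rcases hp.1.eq_or_lt with h | hp1
    · subst h; have := ha q hq; nlinarith [hq.1]
    rcases hp.2.eq_or_lt with h | hp2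
    · subst h; have := hb q hq; nlinarith [hq.1]
    exfalso
    obtain ⟨d1, d2, d3, d4⟩ := hD p q hp1 hp2 hq1 hq.2
    have n1 : Ft p q + η ≤ 0 := by
      refine left_deriv_nonpos hq1 (f := fun τ => F p τ + η * (τ - s0)) ?_ ?_
      · refine d1.add (?_ : HasDerivAt (fun τ => η * (τ - s0)) η q)
        have := ((hasDerivAt_id q).sub_const s0).const_mul η
        simpa using this
      · intro s hs; exact hmin' p hp s ⟨hs.1, hs.2.trans hq.2⟩
    have n2 : 0 ≤ Fyy p q := by
      refine second_deriv_nonneg (f := fun ξ => F ξ q) (f' := fun ξ => Fy ξ q) (x := p) ?_ d3 ?_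
      · filter_upwards [Ioo_mem_nhds hp1 hp2] with z hz
        exact (hD z q hz.1 hz.2 hq1 hq.2).2.1
      · filter_upwards [Ioo_mem_nhds hp1 hp2] with z hz
        have := hmin' z ⟨hz.1.le, hz.2.le⟩ q hq
        linarith
    nlinarith [mul_nonneg hd.le n2]
  intro y hy t ht
  by_contra hneg
  push Not at hneg
  have h1 : 0 ≤ t - s0 := by linarith [ht.1]
  have h2 := key (-(F y t) / (2 * (t - s0 + 1))) (div_pos (by linarith) (by linarith)) y hy t ht
  have : -(F y t) / (2 * (t - s0 + 1)) * (t - s0) ≤ -(F y t) / 2 := by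
    rw [div_mul_eq_mul_div, div_le_div_iff₀ (by linarith) (by norm_num)]
    nlinarith
  linarith

/-- whole line minimum principle for functions bounded below -/
lemma line_mp {d s0 t0 K : ℝ} (hd : 0 < d) {F Ft Fy Fyy : ℝ → ℝ → ℝ}
    (hc : ContinuousOn (fun p : ℝ × ℝ => F p.1 p.2) (univ ×ˢ Icc s0 t0))
    (hD : ∀ y t, s0 < t → t ≤ t0 → HasDerivAt (fun τ => F y τ) (Ft y t) t ∧
      HasDerivAt (fun ξ => F ξ t) (Fy y t) y ∧ HasDerivAt (fun ξ => Fy ξ t) (Fyy y t) y ∧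
      d * Fyy y t ≤ Ft y t)
    (hi : ∀ y, 0 ≤ F y s0)
    (hK : ∀ y, ∀ t ∈ Icc s0 t0, -K ≤ F y t) :
    ∀ y, ∀ t ∈ Icc s0 t0, 0 ≤ F y t := by
  intro y t ht
  have hK0 : 0 ≤ |K| := abs_nonneg K
  have hKK := le_abs_self K
  have key : ∀ R : ℝ, |y| ≤ R → 0 < R → 0 ≤ F y t + |K| / R ^ 2 * (y ^ 2 + 2 * d * (t - s0)) := by
    intro R hyR hR
    have hε : 0 ≤ |K| / R ^ 2 := by positivity
    have hεR : |K| / R ^ 2 * R ^ 2 = |K| := by field_simp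
    refine rect_mp (a := -R) (b := R) hd (F := fun y t => F y t + |K| / R ^ 2 * (y ^ 2 + 2 * d * (t - s0)))
      (Ft := fun y t => Ft y t + |K| / R ^ 2 * (2 * d)) (Fy := fun y t => Fy y t + |K| / R ^ 2 * (2 * y))
      (Fyy := fun y t => Fyy y t + |K| / R ^ 2 * 2) ?_ ?_ ?_ ?_ ?_ y (abs_le.1 hyR) t ht
    · exact (hc.mono (prod_mono (subset_univ _) subset_rfl)).add (by fun_prop)
    · intro y t _ _ h1 h2
      obtain ⟨d1, d2, d3, d4⟩ := hD y t h1 h2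
      refine ⟨d1.add ?_, d2.add ?_, d3.add ?_, by linarith⟩
      · have := (((hasDerivAt_id t).sub_const s0).const_mul (2 * d) |>.const_add (y ^ 2)).const_mul (|K| / R ^ 2)
        simpa using this
      · have := ((hasDerivAt_pow 2 y).add_const (2 * d * (t - s0))).const_mul (|K| / R ^ 2)
        simpa using this
      · have := ((hasDerivAt_id y).const_mul 2).const_mul (|K| / R ^ 2)
        simpa using this
    · intro y _
      have := hi y
      have : 0 ≤ |K| / R ^ 2 * (y ^ 2 + 2 * d * (s0 - s0)) := by simp; positivity
      linarith
    · intro t ht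
      have := hK (-R) t ht
      have : 0 ≤ |K| / R ^ 2 * (2 * d * (t - s0)) := by
        have : 0 ≤ t - s0 := by linarith [ht.1]
        positivity
      simp only [neg_sq]
      nlinarith
    · intro t ht
      have := hK R t ht
      have : 0 ≤ |K| / R ^ 2 * (2 * d * (t - s0)) := by
        have : 0 ≤ t - s0 := by linarith [ht.1]
        positivity
      nlinarith
  have lim : Filter.Tendsto (fun R : ℝ => F y t + |K| / R ^ 2 * (y ^ 2 + 2 * d * (t - s0)))
      Filter.atTop (nhds (F y t + 0 * (y ^ 2 + 2 * d * (t - s0)))) := by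
    refine Filter.Tendsto.add tendsto_const_nhds (Filter.Tendsto.mul ?_ tendsto_const_nhds)
    exact Filter.Tendsto.div_atTop tendsto_const_nhds (Filter.tendsto_pow_atTop (by norm_num))
  have := ge_of_tendsto lim (by
    filter_upwards [Filter.eventually_ge_atTop |y|, Filter.eventually_gt_atTop 0] with R h1 h2
    exact key R h1 h2)
  simpa using this

structure Super (d : ℝ) (T : ENNReal) (U h : ℝ → ℝ → ℝ) : Prop where
  cont : ContinuousOn (fun p : ℝ × ℝ => U p.1 p.2) {p : ℝ × ℝ | 0 ≤ p.2 ∧ ENNReal.ofReal p.2 < T}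
  bdd : ∀ t₁ : ℝ, 0 ≤ t₁ → ENNReal.ofReal t₁ < T →
    ∃ K : ℝ, ∀ x t : ℝ, 0 ≤ t → t ≤ t₁ → |U x t| ≤ K
  der : ∃ Ut Uy Uyy : ℝ → ℝ → ℝ, ∀ y t : ℝ, 0 < t → ENNReal.ofReal t < T →
      HasDerivAt (fun τ => U y τ) (Ut y t) t ∧
      HasDerivAt (fun ξ => U ξ t) (Uy y t) y ∧
      HasDerivAt (fun ξ => Uy ξ t) (Uyy y t) y ∧
      Ut y t = d * Uyy y t + h y t
  init : ∀ y, 0 ≤ U y 0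
  hpos : ∀ y t, 0 ≤ h y t

lemma ofReal_lt_mono {s t : ℝ} {T : ENNReal} (hst : s ≤ t) (h : ENNReal.ofReal t < T) :
    ENNReal.ofReal s < T := lt_of_le_of_lt (ENNReal.ofReal_le_ofReal hst) h

lemma Super.nonneg {d : ℝ} (hd : 0 < d) {T : ENNReal} {U h : ℝ → ℝ → ℝ} (S : Super d T U h) :
    ∀ y t, 0 ≤ t → ENNReal.ofReal t < T → 0 ≤ U y t := by
  intro y t ht hT
  obtain ⟨Ut, Uy, Uyy, hD⟩ := S.der
  obtain ⟨K, hK⟩ := S.bdd t ht hT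
  refine line_mp (s0 := 0) (t0 := t) (K := K) hd (F := U) (Ft := Ut) (Fy := Uy) (Fyy := Uyy) ?_ ?_ S.init ?_
    y t ⟨ht, le_rfl⟩
  · refine S.cont.mono ?_
    rintro ⟨p, q⟩ ⟨_, hq⟩
    exact ⟨hq.1, ofReal_lt_mono hq.2 hT⟩
  · intro y s hs hst
    obtain ⟨a, b, c, e⟩ := hD y s hs (ofReal_lt_mono hst hT)
    exact ⟨a, b, c, by rw [e]; linarith [S.hpos y s]⟩
  · intro y s hs
    have := (abs_le.1 (hK y s hs.1 hs.2)).1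
    exact this

lemma Super.bump {d : ℝ} (hd : 0 < d) {T : ENNReal} {U h : ℝ → ℝ → ℝ} (S : Super d T U h)
    {s0 t0 y0 R : ℝ} (hs0 : 0 ≤ s0) (hT : ENNReal.ofReal t0 < T) (hR : 0 < R)
    {g g' : ℝ → ℝ} (hg : ContinuousOn g (Icc s0 t0)) (hg' : ∀ s, s0 < s → s ≤ t0 → HasDerivAt g (g' s) s)
    (hpos : ∀ s, s0 < s → s ≤ t0 → 0 ≤ g' s)
    (hh : ∀ y s, |y - y0| ≤ R → s0 < s → s ≤ t0 → g' s ≤ h y s)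
    (hinit : ∀ y, |y - y0| ≤ R → g s0 * Real.cos (Real.pi / (2 * R) * (y - y0)) ≤ U y s0) :
    ∀ y t, |y - y0| ≤ R → s0 ≤ t → t ≤ t0 →
      g t * Real.exp (-(d * (Real.pi / (2 * R)) ^ 2 * (t - s0))) * Real.cos (Real.pi / (2 * R) * (y - y0))
        ≤ U y t := by
  intro y t hy hst htt
  obtain ⟨Ut, Uy, Uyy, hD⟩ := S.der
  set μ := Real.pi / (2 * R) with hμ
  have hμ0 : 0 < μ := by have := Real.pi_pos; positivity
  have hμR : μ * R = Real.pi / 2 := by rw [hμ]; field_simp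
  set E : ℝ → ℝ := fun s => Real.exp (-(d * μ ^ 2 * (s - s0))) with hE
  have hEd : ∀ s, HasDerivAt E (E s * (-(d * μ ^ 2))) s := by
    intro s
    have := ((((hasDerivAt_id s).sub_const s0).const_mul (d * μ ^ 2)).neg).exp
    simpa [hE] using this
  have hcosd : ∀ z, HasDerivAt (fun z => Real.cos (μ * (z - y0))) (-(μ * Real.sin (μ * (z - y0)))) z := by
    intro z
    have := (((hasDerivAt_id z).sub_const y0).const_mul μ).cos
    simp only [id, mul_one] at this
    convert this using 1
    ring
  have hsind : ∀ z, HasDerivAt (fun z => Real.sin (μ * (z - y0))) (μ * Real.cos (μ * (z - y0))) z := by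
    intro z
    have := (((hasDerivAt_id z).sub_const y0).const_mul μ).sin
    simp only [id, mul_one] at this
    convert this using 1
    ring
  have main := rect_mp (a := y0 - R) (b := y0 + R) (s0 := s0) (t0 := t0) hd
    (F := fun y t => U y t - g t * E t * Real.cos (μ * (y - y0)))
    (Ft := fun y t => Ut y t - (g' t * E t + g t * (E t * (-(d * μ ^ 2)))) * Real.cos (μ * (y - y0)))
    (Fy := fun y t => Uy y t - g t * E t * (-(μ * Real.sin (μ * (y - y0)))))
    (Fyy := fun y t => Uyy y t - g t * E t * (-(μ * (μ * Real.cos (μ * (y - y0))))))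
    ?_ ?_ ?_ ?_ ?_ y ⟨by linarith [(abs_le.1 hy).1], by linarith [(abs_le.1 hy).2]⟩ t ⟨hst, htt⟩
  · simp only [hE] at main; linarith
  · refine ContinuousOn.sub (S.cont.mono ?_) (ContinuousOn.mul (ContinuousOn.mul ?_ ?_) ?_)
    · rintro ⟨p, q⟩ ⟨_, hq⟩
      exact ⟨hs0.trans hq.1, ofReal_lt_mono hq.2 hT⟩
    · exact hg.comp continuousOn_snd (fun p hp => hp.2)
    · simp only [hE]; fun_prop
    · fun_prop
  · intro z s hz1 hz2 hs1 hs2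
    obtain ⟨d1, d2, d3, d4⟩ := hD z s (lt_of_le_of_lt hs0 hs1) (ofReal_lt_mono hs2 hT)
    refine ⟨d1.sub (((hg' s hs1 hs2).mul (hEd s)).mul_const _), d2.sub ((hcosd z).const_mul _),
      d3.sub ((((hsind z).const_mul μ).neg).const_mul _), ?_⟩
    have e1 : E s ≤ 1 := by
      simp only [hE]
      apply Real.exp_le_one_iff.2
      have : 0 ≤ s - s0 := by linarith
      have : 0 ≤ d * μ ^ 2 * (s - s0) := by positivity
      linarith
    have e0 : 0 ≤ E s := (Real.exp_pos _).le
    have c1 := Real.cos_le_one (μ * (z - y0))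
    have h1 := hh z s (abs_le.2 ⟨by linarith, by linarith⟩) hs1 hs2
    have h0 := hpos s hs1 hs2
    have h2 : g' s * E s * Real.cos (μ * (z - y0)) ≤ g' s := by
      have a1 : g' s * E s * Real.cos (μ * (z - y0)) ≤ g' s * E s * 1 :=
        mul_le_mul_of_nonneg_left c1 (by positivity)
      have a2 : g' s * E s ≤ g' s * 1 := mul_le_mul_of_nonneg_left e1 h0
      linarith
    rw [d4]
    linarith
  · intro z hz
    have := hinit z (abs_le.2 ⟨by linarith [hz.1], by linarith [hz.2]⟩)
    simp [hE]; exact this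
  · intro s hs
    have h0 := S.nonneg hd (y0 - R) s (hs0.trans hs.1) (ofReal_lt_mono hs.2 hT)
    have : μ * (y0 - R - y0) = -(Real.pi / 2) := by linarith
    simp only [this, Real.cos_neg, Real.cos_pi_div_two]
    linarith
  · intro s hs
    have h0 := S.nonneg hd (y0 + R) s (hs0.trans hs.1) (ofReal_lt_mono hs.2 hT)
    have : μ * (y0 + R - y0) = (Real.pi / 2) := by linarith
    simp only [this, Real.cos_pi_div_two]
    linarith

lemma cos_half {R z : ℝ} (hR : 0 < R) (hz : |z| ≤ R / 2) : 1 / 2 ≤ Real.cos (Real.pi / (2 * R) * z) := by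
  rw [← Real.cos_abs, ← Real.cos_pi_div_three]
  have h1 : |Real.pi / (2 * R) * z| ≤ Real.pi / 3 := by
    rw [abs_mul, abs_of_pos (by have := Real.pi_pos; positivity)]
    calc Real.pi / (2 * R) * |z| ≤ Real.pi / (2 * R) * (R / 2) :=
          mul_le_mul_of_nonneg_left hz (by have := Real.pi_pos; positivity)
      _ = Real.pi / 4 := by field_simp; norm_num
      _ ≤ _ := by linarith [Real.pi_pos]
  exact Real.cos_le_cos_of_nonneg_of_le_pi (abs_nonneg _) (by linarith [Real.pi_pos]) h1

lemma cos_nn {R z : ℝ} (hR : 0 < R) (hz : |z| ≤ R) : 0 ≤ Real.cos (Real.pi / (2 * R) * z) := by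
  have h1 : |Real.pi / (2 * R) * z| ≤ Real.pi / 2 := by
    rw [abs_mul, abs_of_pos (by have := Real.pi_pos; positivity)]
    calc Real.pi / (2 * R) * |z| ≤ Real.pi / (2 * R) * R :=
          mul_le_mul_of_nonneg_left hz (by have := Real.pi_pos; positivity)
      _ = Real.pi / 2 := by field_simp
  exact Real.cos_nonneg_of_neg_pi_div_two_le_of_le (abs_le.1 h1).1 (abs_le.1 h1).2

/-- heat kernel -/
def hk (d y s : ℝ) : ℝ := (Real.sqrt s)⁻¹ * Real.exp (-(y ^ 2 / (4 * d * s)))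

lemma hk_pos (d y s : ℝ) (hs : 0 < s) : 0 < hk d y s := by
  unfold hk; positivity

lemma hk_t {d y s : ℝ} (hd : 0 < d) (hs : 0 < s) :
    HasDerivAt (fun s => hk d y s) (hk d y s * (y ^ 2 / (4 * d * s ^ 2) - 1 / (2 * s))) s := by
  have h1 := (Real.hasDerivAt_sqrt hs.ne').fun_inv (Real.sqrt_pos.2 hs).ne'
  have h2 : HasDerivAt (fun s => -(y ^ 2 / (4 * d * s))) (y ^ 2 / (4 * d * s ^ 2)) s := by
    have h3 : HasDerivAt (fun s : ℝ => 4 * d * s) (4 * d) s := by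
      simpa using (hasDerivAt_id s).const_mul (4 * d)
    have := (((hasDerivAt_const s (y ^ 2)).fun_div h3 (by positivity))).fun_neg
    refine this.congr_deriv ?_
    field_simp
    ring
  have h4 := h1.fun_mul h2.exp
  refine HasDerivAt.congr_deriv (f := fun s => hk d y s) h4 ?_
  unfold hk
  have hq : Real.sqrt s ≠ 0 := (Real.sqrt_pos.2 hs).ne'
  have hq2 : Real.sqrt s ^ 2 = s := Real.sq_sqrt hs.le
  rw [hq2]
  field_simp
  ring

lemma hk_y {d y s : ℝ} (hd : 0 < d) (hs : 0 < s) :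
    HasDerivAt (fun y => hk d y s) (hk d y s * (-(y / (2 * d * s)))) y := by
  have h2 : HasDerivAt (fun y => -(y ^ 2 / (4 * d * s))) (-(y / (2 * d * s))) y := by
    have := ((hasDerivAt_pow 2 y).div_const (4 * d * s)).fun_neg
    refine this.congr_deriv ?_
    norm_num
    field_simp
    ring
  have := h2.exp.const_mul (Real.sqrt s)⁻¹
  refine HasDerivAt.congr_deriv (f := fun y => hk d y s) this ?_
  unfold hk
  ring

lemma hk_yy {d y s : ℝ} (hd : 0 < d) (hs : 0 < s) :
    HasDerivAt (fun y => hk d y s * (-(y / (2 * d * s))))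
      (hk d y s * (y ^ 2 / (4 * d * s ^ 2) - 1 / (2 * s)) / d) y := by
  have := (hk_y hd hs (y := y)).fun_mul (((hasDerivAt_id' y).div_const (2 * d * s)).fun_neg)
  refine this.congr_deriv ?_
  field_simp
  ring

lemma hk_cont {d θ : ℝ} (hd : 0 < d) (hθ : 0 < θ) (t0 : ℝ) :
    ContinuousOn (fun p : ℝ × ℝ => hk d p.1 (p.2 + θ)) (univ ×ˢ Icc 0 t0) := by
  unfold hk
  have : ∀ p ∈ (univ ×ˢ Icc 0 t0 : Set (ℝ × ℝ)), 0 < p.2 + θ := by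
    rintro ⟨p, q⟩ ⟨_, hq⟩; exact add_pos_of_nonneg_of_pos hq.1 hθ
  refine ContinuousOn.mul (ContinuousOn.inv₀ (by fun_prop) ?_) (ContinuousOn.rexp (ContinuousOn.neg
    (ContinuousOn.div (by fun_prop) (by fun_prop) ?_)))
  · intro p hp; exact (Real.sqrt_pos.2 (this p hp)).ne'
  · intro p hp; have := this p hp; positivity

lemma exists_theta {r d : ℝ} (hr : 0 < r) (hd : 0 < d) :
    ∃ θ : ℝ, 0 < θ ∧ θ < 1 ∧ ∀ y : ℝ, r ≤ |y| → hk d y θ ≤ 1 / 2 * hk d y 1 := by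
  have hq : 0 < r ^ 2 / (4 * d) := by positivity
  have lim := tendsto_rpow_mul_exp_neg_mul_atTop_nhds_zero (1/2) (r ^ 2 / (4 * d)) hq
  have hev := lim.eventually (gt_mem_nhds (show 0 < 1 / 2 * Real.exp (-(r ^ 2 / (4 * d))) by positivity))
  obtain ⟨X, hX1, hX2⟩ := (hev.and (Filter.eventually_gt_atTop 1)).exists
  have hX0 : 0 < X := by linarith
  refine ⟨X⁻¹, by positivity, inv_lt_one_of_one_lt₀ hX2, ?_⟩
  intro y hy
  have hy2 : r ^ 2 ≤ y ^ 2 := by rw [← sq_abs y]; exact pow_le_pow_left₀ hr.le hy 2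
  unfold hk
  rw [Real.sqrt_inv, inv_inv, Real.sqrt_one]
  rw [← Real.sqrt_eq_rpow] at hX1
  have e1 : -(y ^ 2 / (4 * d * X⁻¹)) = -(r ^ 2 / (4 * d)) * X + -((y ^ 2 - r ^ 2) / (4 * d) * X) := by
    field_simp; ring
  have e2 : -(y ^ 2 / (4 * d * 1)) = -(r ^ 2 / (4 * d)) + -((y ^ 2 - r ^ 2) / (4 * d)) := by
    field_simp; ring
  rw [e1, e2, Real.exp_add, Real.exp_add]
  have h3 : 0 ≤ (y ^ 2 - r ^ 2) / (4 * d) := div_nonneg (by linarith) (by positivity)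
  have h4 : Real.exp (-((y ^ 2 - r ^ 2) / (4 * d) * X)) ≤ Real.exp (-((y ^ 2 - r ^ 2) / (4 * d))) := by
    apply Real.exp_le_exp.2; nlinarith
  calc Real.sqrt X * (Real.exp (-(r ^ 2 / (4 * d)) * X) * Real.exp (-((y ^ 2 - r ^ 2) / (4 * d) * X)))
      = (Real.sqrt X * Real.exp (-(r ^ 2 / (4 * d)) * X)) * Real.exp (-((y ^ 2 - r ^ 2) / (4 * d) * X)) := by ring
    _ ≤ (1 / 2 * Real.exp (-(r ^ 2 / (4 * d)))) * Real.exp (-((y ^ 2 - r ^ 2) / (4 * d))) := by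
        gcongr
    _ = _ := by ring

lemma Super.gauss {d : ℝ} (hd : 0 < d) {T : ENNReal} {V h : ℝ → ℝ → ℝ} (S : Super d T V h)
    {a r : ℝ} (ha : 0 < a) (hr : 0 < r) (hV : ∀ y, |y| ≤ r → a ≤ V y 0) :
    ∃ A t1 : ℝ, 0 < A ∧ 1 ≤ t1 ∧ ∀ y t, t1 ≤ t → ENNReal.ofReal t < T → |y| ≤ Real.sqrt t →
      A / Real.sqrt t ≤ V y t := by
  obtain ⟨θ, hθ0, hθ1, hθ⟩ := exists_theta hr hd
  have hsθ := Real.sqrt_pos.2 hθ0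
  have low : ∀ y t, 0 ≤ t → ENNReal.ofReal t < T →
      a * Real.sqrt θ * (hk d y (t + θ) - 1 / 2 * hk d y (t + 1)) ≤ V y t := by
    intro y t ht hT
    obtain ⟨Ut, Uy, Uyy, hD⟩ := S.der
    have hkle : ∀ y s, 0 ≤ s → hk d y (s + θ) ≤ (Real.sqrt θ)⁻¹ := by
      intro y s hs
      unfold hk
      have h1 : (Real.sqrt (s + θ))⁻¹ ≤ (Real.sqrt θ)⁻¹ := by
        apply inv_anti₀ hsθ; exact Real.sqrt_le_sqrt (by linarith)
      have h2 : Real.exp (-(y ^ 2 / (4 * d * (s + θ)))) ≤ 1 := by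
        apply Real.exp_le_one_iff.2
        have : 0 ≤ y ^ 2 / (4 * d * (s + θ)) := by positivity
        linarith
      calc _ ≤ (Real.sqrt θ)⁻¹ * 1 := by gcongr
        _ = _ := mul_one _
    have hinv : a * Real.sqrt θ * (Real.sqrt θ)⁻¹ = a := by field_simp
    have main := line_mp (s0 := 0) (t0 := t) (K := a) hd
      (F := fun y t => V y t - a * Real.sqrt θ * (hk d y (t + θ) - 1 / 2 * hk d y (t + 1)))
      (Ft := fun y t => Ut y t - a * Real.sqrt θ *
        (hk d y (t + θ) * (y ^ 2 / (4 * d * (t + θ) ^ 2) - 1 / (2 * (t + θ)))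
          - 1 / 2 * (hk d y (t + 1) * (y ^ 2 / (4 * d * (t + 1) ^ 2) - 1 / (2 * (t + 1))))))
      (Fy := fun y t => Uy y t - a * Real.sqrt θ *
        (hk d y (t + θ) * (-(y / (2 * d * (t + θ))))
          - 1 / 2 * (hk d y (t + 1) * (-(y / (2 * d * (t + 1)))))))
      (Fyy := fun y t => Uyy y t - a * Real.sqrt θ *
        (hk d y (t + θ) * (y ^ 2 / (4 * d * (t + θ) ^ 2) - 1 / (2 * (t + θ))) / d
          - 1 / 2 * (hk d y (t + 1) * (y ^ 2 / (4 * d * (t + 1) ^ 2) - 1 / (2 * (t + 1))) / d)))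
      ?_ ?_ ?_ ?_ y t ⟨ht, le_rfl⟩
    · linarith
    · refine ContinuousOn.sub (S.cont.mono ?_) (continuousOn_const.mul
        ((hk_cont hd hθ0 t).sub (continuousOn_const.mul (hk_cont hd one_pos t))))
      rintro ⟨p, q⟩ ⟨_, hq⟩
      exact ⟨hq.1, ofReal_lt_mono hq.2 hT⟩
    · intro z s hs hst
      have p1 : 0 < s + θ := by linarith
      have p2 : 0 < s + 1 := by linarith
      obtain ⟨d1, d2, d3, d4⟩ := hD z s hs (ofReal_lt_mono hst hT)
      refine ⟨d1.sub ((HasDerivAt.sub ?_ (HasDerivAt.const_mul _ ?_)).const_mul _),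
        d2.sub (((hk_y hd p1).sub ((hk_y hd p2).const_mul _)).const_mul _),
        d3.sub (((hk_yy hd p1).sub ((hk_yy hd p2).const_mul _)).const_mul _), ?_⟩
      · exact (hk_t hd p1 (y := z)).comp_add_const s θ
      · exact (hk_t hd p2 (y := z)).comp_add_const s 1
      · rw [d4]
        have := S.hpos z s
        generalize hk d z (s + θ) * (z ^ 2 / (4 * d * (s + θ) ^ 2) - 1 / (2 * (s + θ))) = X
        generalize hk d z (s + 1) * (z ^ 2 / (4 * d * (s + 1) ^ 2) - 1 / (2 * (s + 1))) = Y
        have e : d * (Uyy z s - a * Real.sqrt θ * (X / d - 1 / 2 * (Y / d)))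
          = d * Uyy z s - a * Real.sqrt θ * (X - 1 / 2 * Y) := by field_simp
        linarith
    · intro z
      simp only [zero_add]
      rcases le_total |z| r with hz | hz
      · have h1 := hV z hz
        have h2 := hkle z 0 le_rfl
        rw [zero_add] at h2
        have h3 := hk_pos d z 1 one_pos
        have h4 : a * Real.sqrt θ * (hk d z θ - 1 / 2 * hk d z 1) ≤ a * Real.sqrt θ * (Real.sqrt θ)⁻¹ :=
          mul_le_mul_of_nonneg_left (by linarith) (by positivity)
        linarith
      · have h1 := S.init z
        have h2 := hθ z hz
        have : a * Real.sqrt θ * (hk d z θ - 1 / 2 * hk d z 1) ≤ 0 :=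
          mul_nonpos_of_nonneg_of_nonpos (by positivity) (by linarith)
        linarith
    · intro z s hs
      have h1 := S.nonneg hd z s hs.1 (ofReal_lt_mono hs.2 hT)
      have h2 := hkle z s hs.1
      have h3 := hk_pos d z (s + 1) (by linarith [hs.1])
      have h4 : a * Real.sqrt θ * (hk d z (s + θ) - 1 / 2 * hk d z (s + 1)) ≤ a * Real.sqrt θ * (Real.sqrt θ)⁻¹ :=
          mul_le_mul_of_nonneg_left (by linarith) (by positivity)
      linarith
  refine ⟨a * Real.sqrt θ * (1 / 4 * (Real.exp (-(1 / (4 * d))) / 2)), max 1 (1 / d), by positivity, le_max_left _ _, ?_⟩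
  intro y t ht hT hy
  have ht1 : 1 ≤ t := (le_max_left _ _).trans ht
  have ht2 : 1 / d ≤ t := (le_max_right _ _).trans ht
  have ht0 : 0 < t := by linarith
  have hst := Real.sqrt_pos.2 ht0
  refine le_trans ?_ (low y t (by linarith) hT)
  have hy2 : y ^ 2 ≤ t := by
    rw [← sq_abs, ← Real.sq_sqrt ht0.le]; exact pow_le_pow_left₀ (abs_nonneg _) hy 2
  have hdt : 1 ≤ d * t := by
    rw [div_le_iff₀ hd] at ht2; linarith
  -- compare kernels
  have c1 : 3 / 4 * hk d y (t + 1) ≤ hk d y (t + θ) := by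
    unfold hk
    have i1 : (Real.sqrt (t + 1))⁻¹ ≤ (Real.sqrt (t + θ))⁻¹ :=
      inv_anti₀ (Real.sqrt_pos.2 (by linarith)) (Real.sqrt_le_sqrt (by linarith))
    have i2 : 3 / 4 * Real.exp (-(y ^ 2 / (4 * d * (t + 1)))) ≤ Real.exp (-(y ^ 2 / (4 * d * (t + θ)))) := by
      have e : y ^ 2 / (4 * d * (t + θ)) - y ^ 2 / (4 * d * (t + 1)) ≤ 1 / 4 := by
        rw [div_sub_div _ _ (by positivity) (by positivity), div_le_iff₀ (by positivity)]
        have q1 : y ^ 2 * (1 - θ) ≤ t * 1 := mul_le_mul hy2 (by linarith) (by linarith) ht0.le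
        have q2 : t ≤ d * (t + θ) * (t + 1) := by
          have : d * t * t ≤ d * (t + θ) * (t + 1) := by
            have : 0 < d * t * θ + d * t + d * θ := by positivity
            nlinarith
          nlinarith
        have : 0 < 4 * d := by positivity
        nlinarith
      have : Real.exp (-(y ^ 2 / (4 * d * (t + θ)))) = Real.exp (-(y ^ 2 / (4 * d * (t + θ)) - y ^ 2 / (4 * d * (t + 1)))) * Real.exp (-(y ^ 2 / (4 * d * (t + 1)))) := by
        rw [← Real.exp_add]; congr 1; ring
      rw [this]
      refine mul_le_mul_of_nonneg_right ?_ (Real.exp_pos _).le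
      have := Real.add_one_le_exp (-(y ^ 2 / (4 * d * (t + θ)) - y ^ 2 / (4 * d * (t + 1))))
      linarith
    calc _ = (Real.sqrt (t + 1))⁻¹ * (3 / 4 * Real.exp (-(y ^ 2 / (4 * d * (t + 1))))) := by ring
      _ ≤ _ := by gcongr
  have c2 : Real.exp (-(1 / (4 * d))) / 2 / Real.sqrt t ≤ hk d y (t + 1) := by
    unfold hk
    have i1 : (2 * Real.sqrt t)⁻¹ ≤ (Real.sqrt (t + 1))⁻¹ := by
      apply inv_anti₀ (Real.sqrt_pos.2 (by linarith))
      rw [Real.sqrt_le_left (by positivity), mul_pow, Real.sq_sqrt ht0.le]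
      linarith
    have i2 : Real.exp (-(1 / (4 * d))) ≤ Real.exp (-(y ^ 2 / (4 * d * (t + 1)))) := by
      apply Real.exp_le_exp.2
      apply neg_le_neg
      rw [div_le_div_iff₀ (by positivity) (by positivity)]
      nlinarith
    calc _ = (2 * Real.sqrt t)⁻¹ * Real.exp (-(1 / (4 * d))) := by field_simp
      _ ≤ _ := by gcongr
  calc a * Real.sqrt θ * (1 / 4 * (Real.exp (-(1 / (4 * d))) / 2)) / Real.sqrt t
      = a * Real.sqrt θ * (1 / 4 * (Real.exp (-(1 / (4 * d))) / 2 / Real.sqrt t)) := by ring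
    _ ≤ _ := mul_le_mul_of_nonneg_left (by linarith) (by positivity)

/-- constant source version -/
lemma Super.src {d : ℝ} (hd : 0 < d) {T : ENNReal} {U h : ℝ → ℝ → ℝ} (S : Super d T U h)
    {s0 t0 y0 R H : ℝ} (hs0 : 0 ≤ s0) (hst : s0 ≤ t0) (hT : ENNReal.ofReal t0 < T) (hR : 0 < R) (hH : 0 ≤ H)
    (hh : ∀ y s, |y - y0| ≤ R → s0 < s → s ≤ t0 → H ≤ h y s) :
    ∀ y, |y - y0| ≤ R →
      H * (t0 - s0) * Real.exp (-(d * (Real.pi / (2 * R)) ^ 2 * (t0 - s0))) *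
        Real.cos (Real.pi / (2 * R) * (y - y0)) ≤ U y t0 := by
  intro y hy
  refine S.bump hd hs0 hT hR (g := fun s => H * (s - s0)) (g' := fun _ => H) (by fun_prop) ?_
    (fun _ _ _ => hH) hh ?_ y t0 hy hst le_rfl
  · intro s _ _
    simpa using ((hasDerivAt_id s).sub_const s0).const_mul H
  · intro z _
    simpa using S.nonneg hd z s0 hs0 (ofReal_lt_mono hst hT)

/-- persistence -/
lemma Super.pers {d : ℝ} (hd : 0 < d) {T : ENNReal} {U h : ℝ → ℝ → ℝ} (S : Super d T U h)
    {s0 t0 y0 R a : ℝ} (hs0 : 0 ≤ s0) (hst : s0 ≤ t0) (hT : ENNReal.ofReal t0 < T) (hR : 0 < R)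
    (hi : ∀ y, |y - y0| ≤ R → a * Real.cos (Real.pi / (2 * R) * (y - y0)) ≤ U y s0) :
    ∀ y, |y - y0| ≤ R →
      a * Real.exp (-(d * (Real.pi / (2 * R)) ^ 2 * (t0 - s0))) *
        Real.cos (Real.pi / (2 * R) * (y - y0)) ≤ U y t0 := by
  intro y hy
  refine S.bump hd hs0 hT hR (g := fun _ => a) (g' := fun _ => 0) (by fun_prop) ?_
    (fun _ _ _ => le_rfl) (fun y s _ _ _ => S.hpos y s) hi y t0 hy hst le_rfl
  intro s _ _
  exact hasDerivAt_const _ _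

def Concl (V : ℝ → ℝ → ℝ) (c t : ℝ) : Prop :=
  (∃ y, c * Real.log (1 + t) ≤ V y t) ∧
    ∃ y0 R H : ℝ, 0 < R ∧ 0 ≤ H ∧ (∀ y, |y - y0| ≤ R → H ≤ V y t) ∧ c * t ≤ H * (2 * R)

lemma Concl.mono {V : ℝ → ℝ → ℝ} {c c' t : ℝ} (ht : 0 ≤ t) (hc : c' ≤ c) (h : Concl V c t) : Concl V c' t := by
  obtain ⟨⟨y, hy⟩, y0, R, H, h1, h2, h3, h4⟩ := h
  refine ⟨⟨y, le_trans (mul_le_mul_of_nonneg_right hc (Real.log_nonneg (by linarith))) hy⟩, y0, R, H, h1, h2, h3, 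
    le_trans (mul_le_mul_of_nonneg_right hc ht) h4⟩

lemma log_le_id {t : ℝ} (ht : 0 ≤ t) : Real.log (1 + t) ≤ t := by
  have := Real.log_le_sub_one_of_pos (show 0 < 1 + t by linarith)
  linarith

lemma sq_div_le {A B t V : ℝ} (hA : 0 ≤ A) (ht : 0 < t) (h : A / Real.sqrt t ≤ V) (hB : B ≤ A ^ 2 / t) : B ≤ V ^ 2 := by
  refine hB.trans ?_
  have : A ^ 2 / t = (A / Real.sqrt t) ^ 2 := by rw [div_pow, Real.sq_sqrt ht.le]
  rw [this]
  exact pow_le_pow_left₀ (by positivity) h 2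

lemma large_zero {d1 d2 : ℝ} (hd1 : 0 < d1) (hd2 : 0 < d2) {T : ENNReal} {U V : ℝ → ℝ → ℝ}
    (SU : Super d1 T U (fun y t => V (y - 0 * t) t ^ 2))
    (SV : Super d2 T V (fun y t => U (y + 0 * t) t ^ 2)) {a r : ℝ} (ha : 0 < a) (hr : 0 < r)
    (hV : ∀ y, |y| ≤ r → a ≤ V y 0) :
    ∃ c t2 : ℝ, 0 < c ∧ 1 ≤ t2 ∧ ∀ t, t2 ≤ t → ENNReal.ofReal t < T → Concl V c t := by
  obtain ⟨A, t1, hA, ht1, hG⟩ := SV.gauss hd2 ha hr hV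
  set κ := A ^ 2 / 4 * Real.exp (-(d1 * (Real.pi ^ 2 / 4))) with hκ
  have hκ0 : 0 < κ := by positivity
  have step2 : ∀ y t, 2 * t1 ≤ t → ENNReal.ofReal t < T → |y| ≤ Real.sqrt (t / 2) / 2 → κ ≤ U y t := by
    intro y t ht hT hy
    have ht0 : 0 < t := by linarith
    have hR : 0 < Real.sqrt (t / 2) := Real.sqrt_pos.2 (by linarith)
    have := SU.src hd1 (s0 := t / 2) (t0 := t) (y0 := 0) (R := Real.sqrt (t / 2)) (H := A ^ 2 / t)
      (by linarith) (by linarith) hT hR (by positivity) ?_ y (by rw [sub_zero]; linarith)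
    · refine le_trans ?_ this
      have hc := cos_half hR (z := y - 0) (by simpa using hy)
      have e : d1 * (Real.pi / (2 * Real.sqrt (t / 2))) ^ 2 * (t - t / 2) = d1 * (Real.pi ^ 2 / 4) := by
        rw [div_pow, mul_pow, Real.sq_sqrt (by linarith)]
        field_simp; ring
      rw [e]
      have e2 : A ^ 2 / t * (t - t / 2) = A ^ 2 / 2 := by field_simp; ring
      rw [e2]
      have : κ = A ^ 2 / 2 * Real.exp (-(d1 * (Real.pi ^ 2 / 4))) * (1 / 2) := by rw [hκ]; ring
      rw [this]
      exact mul_le_mul_of_nonneg_left hc (by positivity)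
    · intro z s hz hs1 hs2
      have hs0 : 0 < s := by linarith
      have := hG z s (by linarith) (ofReal_lt_mono hs2 hT) ((by simpa using hz : |z| ≤ _).trans (Real.sqrt_le_sqrt hs1.le))
      simp only [zero_mul, sub_zero]
      refine sq_div_le hA.le hs0 this ?_
      gcongr
  set c' := κ ^ 2 / 4 * Real.exp (-(d2 * (2 * Real.pi ^ 2))) with hc'
  have hc'0 : 0 < c' := by positivity
  refine ⟨c' / 4, 4 * t1, by positivity, by linarith, ?_⟩
  intro t ht hT
  have ht0 : 0 < t := by linarith
  have hst : 1 ≤ Real.sqrt t := by rw [Real.one_le_sqrt]; linarith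
  have hR : 0 < Real.sqrt t / 4 := by positivity
  have step3 : ∀ y, |y - 0| ≤ Real.sqrt t / 4 / 2 → c' * t ≤ V y t := by
    intro y hy
    have := SV.src hd2 (s0 := t / 2) (t0 := t) (y0 := 0) (R := Real.sqrt t / 4) (H := κ ^ 2)
      (by linarith) (by linarith) hT hR (by positivity) ?_ y (by linarith)
    · refine le_trans ?_ this
      have hc := cos_half hR hy
      have e : d2 * (Real.pi / (2 * (Real.sqrt t / 4))) ^ 2 * (t - t / 2) = d2 * (2 * Real.pi ^ 2) := by
        rw [div_pow, mul_pow, div_pow, Real.sq_sqrt (by linarith)]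
        field_simp; ring
      rw [e]
      have : c' * t = κ ^ 2 * (t - t / 2) * Real.exp (-(d2 * (2 * Real.pi ^ 2))) * (1 / 2) := by rw [hc']; ring
      rw [this]
      exact mul_le_mul_of_nonneg_left hc (by have : 0 ≤ t - t / 2 := by linarith
                                             positivity)
    · intro z s hz hs1 hs2
      have : κ ≤ U z s := by
        refine step2 z s (by linarith) (ofReal_lt_mono hs2 hT) ?_
        rw [sub_zero] at hz
        have : Real.sqrt t / 2 ≤ Real.sqrt (s / 2) := by
          apply Real.le_sqrt_of_sq_le
          rw [div_pow, Real.sq_sqrt ht0.le]; linarith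
        linarith
      simp only [zero_mul, add_zero]
      exact pow_le_pow_left₀ hκ0.le this 2
  refine ⟨⟨0, ?_⟩, 0, Real.sqrt t / 4 / 2, c' * t, by positivity, by positivity, step3, ?_⟩
  · refine le_trans ?_ (step3 0 (by simp; positivity))
    have := log_le_id ht0.le
    have : c' / 4 * Real.log (1 + t) ≤ c' / 4 * t := mul_le_mul_of_nonneg_left this (by positivity)
    nlinarith [mul_pos hc'0 ht0]
  · have := mul_le_mul_of_nonneg_left hst (mul_pos hc'0 ht0).le
    linarith

set_option maxHeartbeats 2000000 in
lemma large_ne {d1 d2 β : ℝ} (hβ : β ≠ 0) (hd1 : 0 < d1) (hd2 : 0 < d2) {T : ENNReal} {U V : ℝ → ℝ → ℝ}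
    (SU : Super d1 T U (fun y t => V (y - β * t) t ^ 2))
    (SV : Super d2 T V (fun y t => U (y + β * t) t ^ 2)) {a r : ℝ} (ha : 0 < a) (hr : 0 < r)
    (hV : ∀ y, |y| ≤ r → a ≤ V y 0) :
    ∃ c t2 : ℝ, 0 < c ∧ 1 ≤ t2 ∧ ∀ t, t2 ≤ t → ENNReal.ofReal t < T → Concl V c t := by
  obtain ⟨A, t1, hA, ht1, hG⟩ := SV.gauss hd2 ha hr hV
  have hb : 0 < |β| := abs_pos.2 hβ
  set η := 1 / (1 + 2 * |β|) with hη
  have hη0 : 0 < η := by positivity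
  have hη1 : η ≤ 1 := by rw [hη, div_le_one (by positivity)]; linarith
  have hη2 : |β| * η ≤ 1 / 2 := by
    rw [hη, mul_one_div, div_le_div_iff₀ (by positivity) (by norm_num)]; linarith
  set κ := A ^ 2 * η / 2 * Real.exp (-(d1 * Real.pi ^ 2)) with hκ
  have hκ0 : 0 < κ := by positivity
  have step2 : ∀ s' t, t1 ≤ s' → t / 2 ≤ s' → s' + Real.sqrt t ≤ t → ENNReal.ofReal t < T →
      κ / Real.sqrt t ≤ U (β * s') t := by
    intro s' t h1 h2 h3 hT
    have hs'0 : 0 < s' := by linarith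
    have hst' : s' ≤ t := by linarith [Real.sqrt_nonneg t]
    have ht0 : 0 < t := by linarith
    have hp := Real.sqrt_pos.2 ht0
    set q := Real.sqrt s' with hq
    have hq0 : 0 < q := Real.sqrt_pos.2 hs'0
    have hq2 : q ^ 2 = s' := Real.sq_sqrt hs'0.le
    have hqt : q ≤ Real.sqrt t := Real.sqrt_le_sqrt hst'
    have hqt2 : Real.sqrt t / 2 ≤ q := by
      apply Real.le_sqrt_of_sq_le
      rw [div_pow, Real.sq_sqrt ht0.le]; linarith
    have hτ : η * q ≤ q := by nlinarith
    have hτ0 : 0 < η * q := by positivity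
    have hs1 : s' + η * q ≤ t := by linarith
    have hR : 0 < q / 2 := by positivity
    have b1 := SU.src hd1 (s0 := s') (t0 := s' + η * q) (y0 := β * s') (R := q / 2) (H := A ^ 2 / t)
      hs'0.le (by linarith) (ofReal_lt_mono hs1 hT) hR (by positivity) (by
        intro z s hz hs1 hs2
        have hs0 : 0 < s := by linarith
        have := hG (z - β * s) s (by linarith) (ofReal_lt_mono (by linarith) hT) (by
          calc |z - β * s| = |(z - β * s') + β * (s' - s)| := by congr 1; ring
            _ ≤ |z - β * s'| + |β * (s' - s)| := abs_add_le _ _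
            _ ≤ q / 2 + |β| * (η * q) := by
                rw [abs_mul]
                have : |s' - s| ≤ η * q := abs_le.2 ⟨by linarith, by linarith⟩
                gcongr
            _ ≤ q := by nlinarith
            _ ≤ Real.sqrt s := Real.sqrt_le_sqrt hs1.le)
        refine sq_div_le hA.le hs0 this ?_
        gcongr
        linarith)
    have b2 := SU.pers hd1 (s0 := s' + η * q) (t0 := t) (by linarith) hs1 hT hR b1 (β * s') (by simp; linarith)
    refine le_trans ?_ b2
    rw [sub_self, mul_zero, Real.cos_zero, mul_one, mul_assoc, ← Real.exp_add]
    have e1 : s' + η * q - s' = η * q := by ring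
    rw [e1]
    have hex : -(d1 * Real.pi ^ 2) ≤ -(d1 * (Real.pi / (2 * (q / 2))) ^ 2 * (η * q)) +
        -(d1 * (Real.pi / (2 * (q / 2))) ^ 2 * (t - (s' + η * q))) := by
      have e2 : -(d1 * (Real.pi / (2 * (q / 2))) ^ 2 * (η * q)) +
        -(d1 * (Real.pi / (2 * (q / 2))) ^ 2 * (t - (s' + η * q))) = -(d1 * Real.pi ^ 2 * ((t - s') / s')) := by
        have : 2 * (q / 2) = q := by ring
        rw [this, div_pow, hq2]; field_simp; ring
      rw [e2]
      have : (t - s') / s' ≤ 1 := by rw [div_le_one hs'0]; linarith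
      have h5 : d1 * Real.pi ^ 2 * ((t - s') / s') ≤ d1 * Real.pi ^ 2 * 1 :=
        mul_le_mul_of_nonneg_left this (by positivity)
      linarith
    have hpre : A ^ 2 * η / 2 / Real.sqrt t ≤ A ^ 2 / t * (η * q) := by
      have : A ^ 2 * η / 2 / Real.sqrt t = A ^ 2 / t * (η * (Real.sqrt t / 2)) := by
        have h6 : Real.sqrt t ^ 2 = t := Real.sq_sqrt ht0.le
        field_simp
        rw [h6]
      rw [this]
      gcongr
    calc κ / Real.sqrt t = A ^ 2 * η / 2 / Real.sqrt t * Real.exp (-(d1 * Real.pi ^ 2)) := by rw [hκ]; ring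
      _ ≤ _ := mul_le_mul hpre (Real.exp_le_exp.2 hex) (Real.exp_pos _).le (by positivity)
  -- source bound for V
  have hsrc : ∀ y s y0 m0 ρ : ℝ, y0 = -(β * m0) → |y - y0| ≤ |β| * ρ → Real.sqrt s ≤ m0 - ρ → m0 + ρ ≤ s / 2 →
      t1 ≤ s / 2 → ENNReal.ofReal s < T → κ ^ 2 / s ≤ U (y + β * s) s ^ 2 := by
    intro y s y0 m0 ρ hy0 hy h1 h2 h3 hT
    have e : y + β * s = β * (s + y / β) := by field_simp; ring
    have hm : |y / β + m0| ≤ ρ := by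
      have : y / β + m0 = (y - y0) / β := by rw [hy0]; field_simp; ring
      rw [this, abs_div, div_le_iff₀ hb]; linarith
    obtain ⟨l1, l2⟩ := abs_le.1 hm
    rw [e]
    exact sq_div_le hκ0.le (by linarith) (step2 (s + y / β) s (by linarith) (by linarith) (by linarith) hT) le_rfl
  set c1 := κ ^ 2 * Real.exp (-(d2 * (Real.pi ^ 2 / (4 * β ^ 2)))) with hc1
  have hβ2 : 0 < β ^ 2 := by positivity
  have hc10 : 0 < c1 := by positivity
  set c2 := κ ^ 2 / 4 * Real.exp (-(d2 * (32 * Real.pi ^ 2 / β ^ 2))) with hc2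
  have hc20 : 0 < c2 := by positivity
  have hall : ∀ t, (36 + t1) ^ 2 ≤ t → ENNReal.ofReal t < T → Concl V (min (c1 / 8) (c2 * |β| / 16)) t := by
    intro t ht hT
    have ht0 : 0 < t := lt_of_lt_of_le (by positivity) ht
    set p := Real.sqrt t with hp
    have hp1 : 36 + t1 ≤ p := Real.le_sqrt_of_sq_le ht
    have hp0 : 0 < p := by linarith
    have hp2 : p ^ 2 = t := Real.sq_sqrt ht0.le
    have hpt : 36 * p ≤ t := by nlinarith
    refine ⟨⟨-(β * (2 * p)), ?_⟩, -(β * (3 * t / 16)), |β| * (t / 16) / 2, c2, by positivity, hc20.le, ?_, ?_⟩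
    · have hR : 0 < |β| * p := by positivity
      have := SV.bump hd2 (s0 := 6 * p) (t0 := t) (y0 := -(β * (2 * p))) (R := |β| * p) (by linarith) hT hR
        (g := fun s => κ ^ 2 * (Real.log s - Real.log (6 * p))) (g' := fun s => κ ^ 2 / s) ?_ ?_ ?_ ?_ ?_
        (-(β * (2 * p))) t (by simp; positivity) (by linarith) le_rfl
      · refine le_trans ?_ this
        rw [sub_self, mul_zero, Real.cos_zero, mul_one]
        have hlogp : 0 ≤ Real.log p := Real.log_nonneg (by linarith)
        have l1 : Real.log t = 2 * Real.log p := by rw [← hp2, Real.log_pow]; norm_num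
        have l2 : Real.log (6 * p) = Real.log 6 + Real.log p := Real.log_mul (by norm_num) hp0.ne'
        have l3 : 2 * Real.log 6 ≤ Real.log p := by
          have : 2 * Real.log 6 = Real.log (6 ^ 2) := by rw [Real.log_pow]; norm_num
          rw [this]
          exact Real.log_le_log (by norm_num) (by linarith)
        have l4 : Real.log (1 + t) ≤ 2 * Real.log t := by
          have : 2 * Real.log t = Real.log (t ^ 2) := by rw [Real.log_pow]; norm_num
          rw [this]
          exact Real.log_le_log (by linarith) (by nlinarith)
        have l5 : 1 / 8 * Real.log (1 + t) ≤ Real.log t - Real.log (6 * p) := by linarith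
        have l0 : 0 ≤ Real.log (1 + t) := Real.log_nonneg (by linarith)
        have hex : -(d2 * (Real.pi ^ 2 / (4 * β ^ 2))) ≤ -(d2 * (Real.pi / (2 * (|β| * p))) ^ 2 * (t - 6 * p)) := by
          apply neg_le_neg
          have : d2 * (Real.pi / (2 * (|β| * p))) ^ 2 * t = d2 * (Real.pi ^ 2 / (4 * β ^ 2)) := by
            rw [div_pow, mul_pow, mul_pow, sq_abs, hp2]; field_simp; ring
          rw [← this]
          exact mul_le_mul_of_nonneg_left (by linarith) (by positivity)
        calc min (c1 / 8) (c2 * |β| / 16) * Real.log (1 + t) ≤ c1 / 8 * Real.log (1 + t) :=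
              mul_le_mul_of_nonneg_right (min_le_left _ _) l0
          _ = κ ^ 2 * (1 / 8 * Real.log (1 + t)) * Real.exp (-(d2 * (Real.pi ^ 2 / (4 * β ^ 2)))) := by
              rw [hc1]; ring
          _ ≤ _ := mul_le_mul (mul_le_mul_of_nonneg_left l5 (by positivity)) (Real.exp_le_exp.2 hex)
              (Real.exp_pos _).le (mul_nonneg (by positivity) (by linarith))
      · refine continuousOn_const.mul ((Real.continuousOn_log.mono ?_).sub continuousOn_const)
        intro s hs
        have : 0 < s := by linarith [hs.1]
        exact this.ne'
      · intro s hs _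
        have := ((Real.hasDerivAt_log (show s ≠ 0 by linarith)).sub_const (Real.log (6 * p))).const_mul (κ ^ 2)
        simpa [div_eq_mul_inv] using this
      · intro s hs _
        have : 0 < s := by linarith
        positivity
      · intro z s hz hs1 hs2
        refine hsrc z s _ (2 * p) p rfl hz ?_ (by linarith) (by linarith) (ofReal_lt_mono hs2 hT)
        have : Real.sqrt s ≤ p := Real.sqrt_le_sqrt hs2
        linarith
      · intro z _
        simpa using SV.nonneg hd2 z (6 * p) (by linarith) (ofReal_lt_mono (by linarith) hT)
    · intro y hy
      have hR : 0 < |β| * (t / 16) := by positivity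
      have := SV.src hd2 (s0 := t / 2) (t0 := t) (y0 := -(β * (3 * t / 16))) (R := |β| * (t / 16)) (H := κ ^ 2 / t)
        (by linarith) (by linarith) hT hR (by positivity) ?_ y (by linarith)
      · refine le_trans ?_ this
        have hc := cos_half hR hy
        have e2 : κ ^ 2 / t * (t - t / 2) = κ ^ 2 / 2 := by field_simp; ring
        rw [e2]
        have hex : -(d2 * (32 * Real.pi ^ 2 / β ^ 2)) ≤ -(d2 * (Real.pi / (2 * (|β| * (t / 16)))) ^ 2 * (t - t / 2)) := by
          apply neg_le_neg
          have : d2 * (Real.pi / (2 * (|β| * (t / 16)))) ^ 2 * (t - t / 2) = d2 * (32 * Real.pi ^ 2 / β ^ 2) / t := by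
            rw [div_pow, mul_pow, mul_pow, sq_abs]; field_simp; ring
          rw [this]
          exact div_le_self (by positivity) (by linarith)
        calc c2 = κ ^ 2 / 2 * Real.exp (-(d2 * (32 * Real.pi ^ 2 / β ^ 2))) * (1 / 2) := by rw [hc2]; ring
          _ ≤ _ := mul_le_mul (mul_le_mul_of_nonneg_left (Real.exp_le_exp.2 hex) (by positivity)) hc (by norm_num) (by positivity)
      · intro z s hz hs1 hs2
        have hs0 : 0 < s := by linarith
        refine le_trans ?_ (hsrc z s _ (3 * t / 16) (t / 16) rfl hz ?_ (by linarith) (by linarith) (ofReal_lt_mono hs2 hT))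
        · gcongr
        · have : Real.sqrt s ≤ p := Real.sqrt_le_sqrt hs2
          linarith
    · have := mul_le_mul_of_nonneg_right (min_le_right (c1 / 8) (c2 * |β| / 16)) ht0.le
      linarith
  exact ⟨_, (36 + t1) ^ 2, by positivity, by nlinarith, hall⟩

lemma core {d1 d2 β : ℝ} (hd1 : 0 < d1) (hd2 : 0 < d2) {T : ENNReal} {U V : ℝ → ℝ → ℝ}
    (SU : Super d1 T U (fun y t => V (y - β * t) t ^ 2))
    (SV : Super d2 T V (fun y t => U (y + β * t) t ^ 2)) {a r : ℝ} (ha : 0 < a) (hr : 0 < r)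
    (hV : ∀ y, |y| ≤ r → a ≤ V y 0) :
    ∃ c : ℝ, 0 < c ∧ ∀ t, 0 ≤ t → ENNReal.ofReal t < T → Concl V c t := by
  have hlarge : ∃ c t2 : ℝ, 0 < c ∧ 1 ≤ t2 ∧ ∀ t, t2 ≤ t → ENNReal.ofReal t < T → Concl V c t := by
    by_cases hβ : β = 0
    · subst hβ; exact large_zero hd1 hd2 SU SV ha hr hV
    · exact large_ne hβ hd1 hd2 SU SV ha hr hV
  obtain ⟨c, t2, hc, ht2, hL⟩ := hlarge
  set ε := a * Real.exp (-(d2 * (Real.pi / (2 * r)) ^ 2 * t2)) * (1 / 2) with hε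
  have hε0 : 0 < ε := by positivity
  have hS : ∀ t, 0 ≤ t → t ≤ t2 → ENNReal.ofReal t < T → Concl V (min (ε / t2) (ε * r / t2)) t := by
    intro t ht htt hT
    have low : ∀ y, |y - 0| ≤ r / 2 → ε ≤ V y t := by
      intro y hy
      have := SV.pers hd2 (s0 := 0) (t0 := t) (y0 := 0) (R := r) (a := a) le_rfl ht hT hr (by
        intro z hz
        have h1 := hV z (by simpa using hz)
        have h2 := Real.cos_le_one (Real.pi / (2 * r) * (z - 0))
        nlinarith) y (by linarith)
      refine le_trans ?_ this
      rw [hε, sub_zero t]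
      refine mul_le_mul (mul_le_mul_of_nonneg_left (Real.exp_le_exp.2 ?_) ha.le) (cos_half hr hy) (by norm_num) (by positivity)
      exact neg_le_neg (mul_le_mul_of_nonneg_left htt (by positivity))
    have hm : ∀ X, 0 ≤ X → X / t2 * t ≤ X := by
      intro X hX
      rw [div_mul_eq_mul_div, div_le_iff₀ (by linarith)]
      exact mul_le_mul_of_nonneg_left htt hX
    refine ⟨⟨0, le_trans ?_ (low 0 (by simp; positivity))⟩, 0, r / 2, ε, by positivity, hε0.le, low, ?_⟩
    · calc _ ≤ ε / t2 * t := mul_le_mul (min_le_left _ _) (log_le_id ht) (Real.log_nonneg (by linarith)) (by positivity)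
        _ ≤ _ := hm _ hε0.le
    · calc _ ≤ ε * r / t2 * t := mul_le_mul_of_nonneg_right (min_le_right _ _) ht
        _ ≤ ε * r := hm _ (by positivity)
        _ = _ := by ring
  refine ⟨min c (min (ε / t2) (ε * r / t2)), by positivity, ?_⟩
  intro t ht hT
  rcases le_total t t2 with h | h
  · exact (hS t ht h hT).mono ht (min_le_right _ _)
  · exact (hL t h hT).mono ht (min_le_left _ _)

lemma frame {d c x0 : ℝ} {T : ENNReal} {w wt wx wxx f : ℝ → ℝ → ℝ}
    (hcont : ContinuousOn (fun p : ℝ × ℝ => w p.1 p.2) {p : ℝ × ℝ | 0 ≤ p.2 ∧ ENNReal.ofReal p.2 < T})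
    (hb : ∀ t₁ : ℝ, 0 ≤ t₁ → ENNReal.ofReal t₁ < T →
      ∃ K : ℝ, ∀ x t : ℝ, 0 ≤ t → t ≤ t₁ → |w x t| ≤ K)
    (hD : ∀ x t : ℝ, 0 < t → ENNReal.ofReal t < T →
      HasDerivAt (fun τ => w x τ) (wt x t) t ∧
      HasDerivAt (fun ξ => w ξ t) (wx x t) x ∧
      HasDerivAt (fun ξ => wx ξ t) (wxx x t) x ∧
      wt x t = d * wxx x t + c * wx x t + f x t)
    (hct : ContinuousOn (fun p : ℝ × ℝ => wt p.1 p.2) {p : ℝ × ℝ | 0 < p.2 ∧ ENNReal.ofReal p.2 < T})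
    (hcx : ContinuousOn (fun p : ℝ × ℝ => wx p.1 p.2) {p : ℝ × ℝ | 0 < p.2 ∧ ENNReal.ofReal p.2 < T})
    (h0 : ∀ x, 0 ≤ w x 0) (hf : ∀ x t, 0 ≤ f x t) :
    Super d T (fun y t => w (y + x0 - c * t) t) (fun y t => f (y + x0 - c * t) t) := by
  have hopen : IsOpen {p : ℝ × ℝ | 0 < p.2 ∧ ENNReal.ofReal p.2 < T} := by
    refine (isOpen_lt continuous_const continuous_snd).inter ?_
    exact isOpen_lt (ENNReal.continuous_ofReal.comp continuous_snd) continuous_const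
  refine ⟨?_, ?_, ?_, fun y => by simpa using h0 _, fun y t => hf _ _⟩
  · have : ContinuousOn (fun p : ℝ × ℝ => (p.1 + x0 - c * p.2, p.2))
      {p : ℝ × ℝ | 0 ≤ p.2 ∧ ENNReal.ofReal p.2 < T} := by fun_prop
    exact hcont.comp this (fun p hp => hp)
  · intro t₁ h1 h2
    obtain ⟨K, hK⟩ := hb t₁ h1 h2
    exact ⟨K, fun x t h3 h4 => hK _ t h3 h4⟩
  · refine ⟨fun y t => wt (y + x0 - c * t) t - c * wx (y + x0 - c * t) t, fun y t => wx (y + x0 - c * t) t,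
      fun y t => wxx (y + x0 - c * t) t, ?_⟩
    intro y t ht hT
    obtain ⟨d1, d2, d3, d4⟩ := hD (y + x0 - c * t) t ht hT
    refine ⟨?_, ?_, ?_, by simp only [d4]; ring⟩
    · have hmem : (y + x0 - c * t, t) ∈ {p : ℝ × ℝ | 0 < p.2 ∧ ENNReal.ofReal p.2 < T} := ⟨ht, hT⟩
      have hnh := hopen.mem_nhds hmem
      have hF := hasStrictFDerivAt_uncurry_coprod (𝕜 := ℝ) (u := (y + x0 - c * t, t)) (f := w)
        (f₁ := fun x t => ContinuousLinearMap.toSpanSingleton ℝ (wx x t))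
        (f₂ := fun x t => ContinuousLinearMap.toSpanSingleton ℝ (wt x t))
        (by filter_upwards [hnh] with q hq
            exact (hD q.1 q.2 hq.1 hq.2).2.1.hasFDerivAt)
        (by filter_upwards [hnh] with q hq
            exact (hD q.1 q.2 hq.1 hq.2).1.hasFDerivAt)
        (by
          have h1 := hcx.continuousAt hnh
          exact ((ContinuousLinearMap.toSpanSingletonCLE (𝕜 := ℝ) (E := ℝ)).continuous.continuousAt).comp h1)
        (by
          have h1 := hct.continuousAt hnh
          exact ((ContinuousLinearMap.toSpanSingletonCLE (𝕜 := ℝ) (E := ℝ)).continuous.continuousAt).comp h1)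
      have hcurve : HasDerivAt (fun τ : ℝ => (y + x0 - c * τ, τ)) (-c, 1) t := by
        refine HasDerivAt.prodMk ?_ (hasDerivAt_id' t)
        simpa using ((hasDerivAt_id' t).const_mul c).const_sub (y + x0)
      have := HasFDerivAt.comp_hasDerivAt (f := fun τ : ℝ => (y + x0 - c * τ, τ)) t hF.hasFDerivAt hcurve
      refine this.congr_deriv ?_
      simp [Function.HasUncurry.uncurry]
      ring
    · have : HasDerivAt (fun ξ : ℝ => ξ + x0 - c * t) 1 y := ((hasDerivAt_id' y).add_const x0).sub_const (c * t)
      exact (HasDerivAt.comp y (h₂ := fun ξ => w ξ t) d2 this).congr_deriv (mul_one _)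
    · have : HasDerivAt (fun ξ : ℝ => ξ + x0 - c * t) 1 y := ((hasDerivAt_id' y).add_const x0).sub_const (c * t)
      exact (HasDerivAt.comp y (h₂ := fun ξ => wx ξ t) d3 this).congr_deriv (mul_one _)

lemma nbhd_pos {g : ℝ → ℝ} {x0 : ℝ} (hg : ContinuousAt g x0) (h : 0 < g x0) :
    ∃ r : ℝ, 0 < r ∧ ∀ y, |y| ≤ r → g x0 / 2 ≤ g (y + x0) := by
  have := hg.eventually (lt_mem_nhds (show g x0 / 2 < g x0 by linarith))
  obtain ⟨ε, hε, hb⟩ := Metric.eventually_nhds_iff.1 this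
  refine ⟨ε / 2, by positivity, fun y hy => (hb ?_).le⟩
  rw [Real.dist_eq, add_sub_cancel_right]
  linarith

lemma finish {w z : ℝ → ℝ → ℝ} {c x0 t c' : ℝ}
    (h : Concl (fun y t => w (y + x0 - c' * t) t) c t) :
    (∀ K : ℝ, (∀ x : ℝ, |w x t| + |z x t| ≤ K) → c * Real.log (1 + t) ≤ K) ∧
        ENNReal.ofReal (c * t) ≤ ∫⁻ x : ℝ, ENNReal.ofReal (|w x t| + |z x t|) := by
  obtain ⟨⟨y, hy⟩, y0, R, H, hR, hH, hl, hc⟩ := h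
  constructor
  · intro K hK
    have h1 := hK (y + x0 - c' * t)
    have h2 := le_abs_self (w (y + x0 - c' * t) t)
    have h3 := abs_nonneg (z (y + x0 - c' * t) t)
    linarith
  · set m := y0 + x0 - c' * t with hm
    calc ENNReal.ofReal (c * t) ≤ ENNReal.ofReal (H * (2 * R)) := ENNReal.ofReal_le_ofReal hc
      _ = ENNReal.ofReal H * volume (Icc (m - R) (m + R)) := by
          rw [Real.volume_Icc, ENNReal.ofReal_mul hH]; congr 2; ring
      _ = ∫⁻ x in Icc (m - R) (m + R), ENNReal.ofReal H := by rw [setLIntegral_const]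
      _ ≤ ∫⁻ x in Icc (m - R) (m + R), ENNReal.ofReal (|w x t| + |z x t|) := by
          refine setLIntegral_mono' measurableSet_Icc fun x hx => ENNReal.ofReal_le_ofReal ?_
          have h1 := hl (x - x0 + c' * t) (abs_le.2 ⟨by linarith [hx.1], by linarith [hx.2]⟩)
          have e : x - x0 + c' * t + x0 - c' * t = x := by ring
          simp only [e] at h1
          have h2 := le_abs_self (w x t)
          have h3 := abs_nonneg (z x t)
          linarith
      _ ≤ _ := setLIntegral_le_lintegral _ _

/-- Theorem 1.5: growth of nontrivial nonnegative solutions to the quadratically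
coupled system `u_t = d₁ u_xx + c₁ u_x + v²`, `v_t = d₂ v_xx + c₂ v_x + u²`.
The supremum lower bound is expressed as: every uniform-in-`x` bound `K` on
`|u| + |v|` at time `t` must satisfy `c log(1+t) ≤ K`; the `L¹` lower bound uses
the Lebesgue integral of the (possibly non-integrable) nonnegative integrand. -/
theorem growth_quadratic_coupling
    (α d₁ d₂ c₁ c₂ : ℝ) (hα : α ∈ Set.Ioo (0 : ℝ) 1)
    (hd₁ : 0 < d₁) (hd₂ : 0 < d₂)
    (u₀ v₀ : ℝ → ℝ)
    (hu₀b : ∃ B : ℝ, ∀ x : ℝ, |u₀ x| ≤ B) (hv₀b : ∃ B : ℝ, ∀ x : ℝ, |v₀ x| ≤ B)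
    (hu₀h : HolderCont α u₀) (hv₀h : HolderCont α v₀)
    (hu₀pos : ∀ x : ℝ, 0 ≤ u₀ x) (hv₀pos : ∀ x : ℝ, 0 ≤ v₀ x)
    (hnontriv : ¬ (∀ x : ℝ, u₀ x = 0 ∧ v₀ x = 0))
    (T : ENNReal) (hT : 0 < T) (u v : ℝ → ℝ → ℝ)
    (hsol : IsClassicalSolution d₁ d₂ c₁ c₂
      (fun p : ℝ × ℝ => p.2 ^ 2) (fun p : ℝ × ℝ => p.1 ^ 2)
      (fun _ : ℝ × ℝ => 0) (fun _ : ℝ × ℝ => 0) T u₀ v₀ u v) :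
    ∃ c : ℝ, 0 < c ∧
      ∀ t : ℝ, 0 ≤ t → ENNReal.ofReal t < T →
        (∀ K : ℝ, (∀ x : ℝ, |u x t| + |v x t| ≤ K) → c * Real.log (1 + t) ≤ K) ∧
        ENNReal.ofReal (c * t) ≤ ∫⁻ x : ℝ, ENNReal.ofReal (|u x t| + |v x t|) := by
  obtain ⟨hu0, hv0, hcont, hbdd, ut, vt, ux, vx, uxx, vxx, gx, hx, hD, hC⟩ := hsol
  have hgx : ∀ x t : ℝ, 0 < t → ENNReal.ofReal t < T → gx x t = 0 := fun x t h1 h2 =>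
    (hD x t h1 h2).2.2.2.1.unique (hasDerivAt_const _ _)
  have hhx : ∀ x t : ℝ, 0 < t → ENNReal.ofReal t < T → hx x t = 0 := fun x t h1 h2 =>
    (hD x t h1 h2).2.2.2.2.2.2.2.1.unique (hasDerivAt_const _ _)
  have SU : ∀ x0 : ℝ, Super d₁ T (fun y t => u (y + x0 - c₁ * t) t)
      (fun y t => v (y + x0 - c₁ * t) t ^ 2) := by
    intro x0
    refine frame (wt := ut) (wx := ux) (wxx := uxx) (f := fun x t => v x t ^ 2) (continuous_fst.comp_continuousOn hcont) ?_ ?_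
      (continuous_fst.comp_continuousOn hC)
      ((continuous_fst.comp continuous_snd).comp_continuousOn hC) (fun x => by rw [hu0]; exact hu₀pos x)
      (fun _ _ => sq_nonneg _)
    · intro t1 h1 h2
      obtain ⟨K, hK⟩ := hbdd t1 h1 h2
      exact ⟨K, fun x t h3 h4 => by linarith [hK x t h3 h4, abs_nonneg (v x t)]⟩
    · intro x t h1 h2
      have h := hD x t h1 h2
      refine ⟨h.1, h.2.1, h.2.2.1, ?_⟩
      have e := h.2.2.2.2.2.2.2.2.1
      rw [hgx x t h1 h2, add_zero] at e
      exact e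
  have SV : ∀ x0 : ℝ, Super d₂ T (fun y t => v (y + x0 - c₂ * t) t)
      (fun y t => u (y + x0 - c₂ * t) t ^ 2) := by
    intro x0
    refine frame (wt := vt) (wx := vx) (wxx := vxx) (f := fun x t => u x t ^ 2) (continuous_snd.comp_continuousOn hcont) ?_ ?_
      ((continuous_fst.comp (continuous_snd.comp (continuous_snd.comp continuous_snd))).comp_continuousOn hC)
      ((continuous_fst.comp (continuous_snd.comp (continuous_snd.comp (continuous_snd.comp continuous_snd)))).comp_continuousOn hC)
      (fun x => by rw [hv0]; exact hv₀pos x)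
      (fun _ _ => sq_nonneg _)
    · intro t1 h1 h2
      obtain ⟨K, hK⟩ := hbdd t1 h1 h2
      exact ⟨K, fun x t h3 h4 => by linarith [hK x t h3 h4, abs_nonneg (u x t)]⟩
    · intro x t h1 h2
      have h := hD x t h1 h2
      refine ⟨h.2.2.2.2.1, h.2.2.2.2.2.1, h.2.2.2.2.2.2.1, ?_⟩
      have e := h.2.2.2.2.2.2.2.2.2
      rw [hhx x t h1 h2, add_zero] at e
      exact e
  have hc0 : Continuous (fun x : ℝ => (u x 0, v x 0)) := by
    have h1 : Continuous (fun x : ℝ => (x, (0 : ℝ))) := by fun_prop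
    exact hcont.comp_continuous h1 (fun x => ⟨le_rfl, by simpa using hT⟩)
  push Not at hnontriv
  obtain ⟨x0, hx0⟩ := hnontriv
  rcases (hu₀pos x0).lt_or_eq with hpos | hzero
  · rw [← hu0] at hpos
    obtain ⟨r, hr, hlow⟩ := nbhd_pos (g := fun x => u x 0) (continuous_fst.comp hc0).continuousAt hpos
    obtain ⟨c, hc, hconcl⟩ := core (β := c₂ - c₁) (V := fun y t => u (y + x0 - c₁ * t) t)
      (U := fun y t => v (y + x0 - c₂ * t) t) (a := u x0 0 / 2) (r := r) hd₂ hd₁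
      (by
        convert SV x0 using 5
        ring)
      (by
        convert SU x0 using 5
        ring) (by linarith) hr
      (by intro y hy; simpa using hlow y hy)
    refine ⟨c, hc, fun t h1 h2 => finish (hconcl t h1 h2)⟩
  · have hpos : 0 < v x0 0 := by
      rw [hv0]; exact lt_of_le_of_ne (hv₀pos x0) (Ne.symm (hx0 hzero.symm))
    obtain ⟨r, hr, hlow⟩ := nbhd_pos (g := fun x => v x 0) (continuous_snd.comp hc0).continuousAt hpos
    obtain ⟨c, hc, hconcl⟩ := core (β := c₁ - c₂) (V := fun y t => v (y + x0 - c₂ * t) t)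
      (U := fun y t => u (y + x0 - c₁ * t) t) (a := v x0 0 / 2) (r := r) hd₁ hd₂
      (by
        convert SU x0 using 5
        ring)
      (by
        convert SV x0 using 5
        ring) (by linarith) hr
      (by intro y hy; simpa using hlow y hy)
    refine ⟨c, hc, fun t h1 h2 => ?_⟩
    have := finish (z := u) (hconcl t h1 h2)
    simpa only [add_comm |u _ t|] using this
end
end

section
/- Gaussian convolution identity producing exponential temporal decay from a velocity difference. Let d > 0, M > 0, c₁, c₂, x ∈ ℝ and 0 ≤ s < t. Then ∫_ℝ exp( −2(x−y+c₁(t−s))²/(M(t−s)) − (y+c₁s)²/(M(1+s)) − (y+c₂s)²/(M(1+s)) ) / ( √(4πd(t−s)) (1+s) ) dy = √M · exp( −(x+c₁t)²/(M(1+t)) − s²(t−s)(c₁−c₂)²/(2M(1+s)(1+t)) − (x + c₁t + s(c₂−c₁))²/(M(1+t)) ) / ( 2 √( 2d(1+t)(1+s) ) ). -/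
open MeasureTheory

noncomputable section

/-- Gaussian convolution identity producing exponential temporal decay from a
velocity difference (identity (3.9) of the paper). -/
theorem gaussian_convolution_velocity_difference
    (d M c₁ c₂ x s t : ℝ) (hd : 0 < d) (hM : 0 < M) (hs : 0 ≤ s) (hst : s < t) :
    (∫ y : ℝ,
        Real.exp (-(2 * (x - y + c₁ * (t - s)) ^ 2) / (M * (t - s)) -
            (y + c₁ * s) ^ 2 / (M * (1 + s)) - (y + c₂ * s) ^ 2 / (M * (1 + s))) /
          (Real.sqrt (4 * Real.pi * d * (t - s)) * (1 + s))) =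
      Real.sqrt M *
        Real.exp (-(x + c₁ * t) ^ 2 / (M * (1 + t)) -
            s ^ 2 * (t - s) * (c₁ - c₂) ^ 2 / (2 * M * (1 + s) * (1 + t)) -
            (x + c₁ * t + s * (c₂ - c₁)) ^ 2 / (M * (1 + t))) /
        (2 * Real.sqrt (2 * d * (1 + t) * (1 + s))) := by
  obtain ⟨u, rfl⟩ : ∃ u, t = s + u := ⟨t - s, by ring⟩
  have hu : 0 < u := by linarith
  have h1 : 0 < 1 + s := by linarith
  have h2 : 0 < 1 + (s + u) := by linarith
  have hu' : s + u - s = u := by ring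
  rw [hu']
  set E : ℝ := -(x + c₁ * (s + u)) ^ 2 / (M * (1 + (s + u))) -
            s ^ 2 * u * (c₁ - c₂) ^ 2 / (2 * M * (1 + s) * (1 + (s + u))) -
            (x + c₁ * (s + u) + s * (c₂ - c₁)) ^ 2 / (M * (1 + (s + u))) with hE
  set b : ℝ := 2 * (1 + (s + u)) / (M * u * (1 + s)) with hb
  set m : ℝ := ((x + c₁ * (s + u)) * (1 + s) - u * (s * (c₂ - c₁)) / 2) / (1 + (s + u)) - c₁ * s
    with hm
  have key : ∀ y : ℝ, Real.exp (-(2 * (x - y + c₁ * u) ^ 2) / (M * u) -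
            (y + c₁ * s) ^ 2 / (M * (1 + s)) - (y + c₂ * s) ^ 2 / (M * (1 + s))) /
          (Real.sqrt (4 * Real.pi * d * u) * (1 + s)) =
      (Real.exp E / (Real.sqrt (4 * Real.pi * d * u) * (1 + s))) *
        Real.exp (-b * (y - m) ^ 2) := by
    intro y
    rw [div_mul_eq_mul_div, ← Real.exp_add]
    congr 2
    rw [hE, hb, hm]
    field_simp
    ring
  simp_rw [key]
  rw [integral_const_mul, integral_sub_right_eq_self (fun y : ℝ => Real.exp (-b * y ^ 2)) m,
    integral_gaussian]
  have hpi := Real.pi_pos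
  have hsq : Real.sqrt (Real.pi / b) * (2 * Real.sqrt (2 * d * (1 + (s + u)) * (1 + s))) =
      Real.sqrt M * (Real.sqrt (4 * Real.pi * d * u) * (1 + s)) := by
    have hb0 : 0 < b := by positivity
    rw [← sq_eq_sq₀ (by positivity) (by positivity)]
    simp only [mul_pow]
    rw [Real.sq_sqrt (by positivity), Real.sq_sqrt (by positivity), Real.sq_sqrt hM.le,
      Real.sq_sqrt (by positivity), hb]
    field_simp
    ring
  have hA : 0 < Real.sqrt (4 * Real.pi * d * u) * (1 + s) := by positivity
  have hB : 0 < 2 * Real.sqrt (2 * d * (1 + (s + u)) * (1 + s)) := by positivity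
  rw [div_mul_eq_mul_div, div_eq_div_iff hA.ne' hB.ne']
  linear_combination Real.exp E * hsq
end
end

section
/- Uniform temporal-decay bound for the velocity-difference exponential. Let M > 0 and c₁, c₂ ∈ ℝ with c₁ ≠ c₂, and let j ∈ {0,1}. Then there exists a constant C > 0 such that for every t ≥ 0: ∫_0^t exp( −s²(t−s)(c₁−c₂)²/(2M(1+s)(1+t)) ) / ( √(1+s) · (t−s)^{j/2} ) ds ≤ C / (1+t)^{j/2}. -/
open MeasureTheory Set

noncomputable section

lemma vd_pt (b t s p : ℝ) (hb : 0 < b) (hs : 0 < s) (hst : s < t) (hp : 0 ≤ p) (hp2 : p ≤ 1/2) :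
    Real.exp (-(12 * b * (s ^ 2 * (t - s) / ((1 + s) * (1 + t))))) /
      (Real.sqrt (1 + s) * (t - s) ^ p) ≤
    (1 + t) ^ (-p) * (2 * Real.exp (3 * b) * Real.exp (-b * s)
      + 2 * Real.exp b * ((t - s) ^ (-p) * Real.exp (-b * (t - s)))) := by
  have hd : 0 < t - s := by linarith
  have h1t : 0 < 1 + t := by linarith
  have h1s : 0 < 1 + s := by linarith
  set X := s ^ 2 * (t - s) / ((1 + s) * (1 + t)) with hX
  have hX0 : 0 ≤ X := by positivity
  have hq1 : 1 ≤ Real.sqrt (1 + s) := by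
    rw [Real.one_le_sqrt]; linarith
  have hqi : (Real.sqrt (1 + s))⁻¹ ≤ 1 := inv_le_one_of_one_le₀ hq1
  have e0 : Real.exp (-(12 * b * X)) / (Real.sqrt (1 + s) * (t - s) ^ p)
      = Real.exp (-(12 * b * X)) * (Real.sqrt (1 + s))⁻¹ * (t - s) ^ (-p) := by
    rw [Real.rpow_neg hd.le, div_eq_mul_inv, mul_inv]; ring
  rw [e0, mul_add]
  have hP : 0 < (t - s) ^ (-p) := Real.rpow_pos_of_pos hd _
  have hQ : 0 < (1 + t) ^ (-p) := Real.rpow_pos_of_pos h1t _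
  have key2 : ∀ r : ℝ, 1 ≤ r → r ^ p ≤ Real.sqrt r := fun r hr => by
    rw [Real.sqrt_eq_rpow]; exact Real.rpow_le_rpow_of_exponent_le hr hp2
  have T1 : 0 ≤ (1 + t) ^ (-p) * (2 * Real.exp (3 * b) * Real.exp (-b * s)) := by positivity
  have T2 : 0 ≤ (1 + t) ^ (-p) *
    (2 * Real.exp b * ((t - s) ^ (-p) * Real.exp (-b * (t - s)))) := by positivity
  have hmul : (1 + t) ^ (-p) * (1 + t) ^ p = 1 := by
    rw [← Real.rpow_add h1t]; simp
  -- second-type bound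
  have second : Real.exp (-(12 * b * X)) ≤ Real.exp b * Real.exp (-b * (t - s)) →
      (Real.sqrt (1 + s))⁻¹ ≤ 2 * (1 + t) ^ (-p) →
      Real.exp (-(12 * b * X)) * (Real.sqrt (1 + s))⁻¹ * (t - s) ^ (-p) ≤
      (1 + t) ^ (-p) * (2 * Real.exp b * ((t - s) ^ (-p) * Real.exp (-b * (t - s)))) := by
    intro h1 h2
    calc _ ≤ (Real.exp b * Real.exp (-b * (t - s))) * (2 * (1 + t) ^ (-p)) * (t - s) ^ (-p) := by
          gcongr
      _ = _ := by ring
  rcases le_total t 1 with ht | ht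
  · refine (second ?_ ?_).trans (by linarith)
    · rw [← Real.exp_add]
      apply Real.exp_le_exp.mpr
      nlinarith [mul_nonneg hb.le hX0]
    · refine hqi.trans ?_
      have : (1 + t) ^ p ≤ 2 := by
        refine (key2 _ (by linarith)).trans ?_
        rw [Real.sqrt_le_left (by norm_num)]; linarith
      calc (1:ℝ) = (1 + t) ^ (-p) * (1 + t) ^ p := hmul.symm
        _ ≤ (1 + t) ^ (-p) * 2 := by gcongr
        _ = _ := by ring
  rcases le_total s (t / 2) with h | h
  · have hXl : s - 3 ≤ 12 * X := by
      rw [hX, ← mul_div_assoc, le_div_iff₀ (by positivity)]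
      have h4 : (1 + t) / 4 ≤ t - s := by linarith
      have : s ^ 2 * ((1 + t) / 4) ≤ s ^ 2 * (t - s) := by gcongr
      nlinarith [mul_nonneg h1t.le (sq_nonneg s), mul_nonneg h1t.le hs.le]
    have h1 : Real.exp (-(12 * b * X)) ≤ Real.exp (3 * b) * Real.exp (-b * s) := by
      rw [← Real.exp_add]
      apply Real.exp_le_exp.mpr
      nlinarith
    have h2 : (t - s) ^ (-p) ≤ 2 * (1 + t) ^ (-p) := by
      have h4 : (1 + t) / 4 ≤ t - s := by linarith
      calc (t - s) ^ (-p) ≤ ((1 + t) / 4) ^ (-p) :=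
            Real.rpow_le_rpow_of_nonpos (by linarith) h4 (by linarith)
        _ = 4 ^ p * (1 + t) ^ (-p) := by
            rw [Real.div_rpow h1t.le (by norm_num), Real.rpow_neg (by norm_num : (0:ℝ) ≤ 4)]
            field_simp
        _ ≤ _ := by
            gcongr
            refine (key2 4 (by norm_num)).trans ?_
            rw [Real.sqrt_le_left (by norm_num)]; norm_num
    have : Real.exp (-(12 * b * X)) * (Real.sqrt (1 + s))⁻¹ * (t - s) ^ (-p) ≤
      (Real.exp (3 * b) * Real.exp (-b * s)) * 1 * (2 * (1 + t) ^ (-p)) := by gcongr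
    linarith
  · refine (second ?_ ?_).trans (by linarith)
    · rw [← Real.exp_add]
      apply Real.exp_le_exp.mpr
      have hXl : t - s ≤ 12 * X := by
        rw [hX, ← mul_div_assoc, le_div_iff₀ (by positivity)]
        have : (1 + s) * (1 + t) ≤ (3 * s) * (4 * s) := by
          apply mul_le_mul <;> linarith
        nlinarith
      nlinarith
    · rw [inv_le_iff_one_le_mul₀ (by positivity)]
      have : (1 + t) ^ p ≤ 2 * Real.sqrt (1 + s) := by
        refine (key2 _ (by linarith)).trans ?_
        rw [Real.sqrt_le_left (by positivity), mul_pow, Real.sq_sqrt h1s.le]; linarith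
      calc (1:ℝ) = (1 + t) ^ (-p) * (1 + t) ^ p := hmul.symm
        _ ≤ (1 + t) ^ (-p) * (2 * Real.sqrt (1 + s)) := by gcongr
        _ = _ := by ring

lemma vd_main (b p : ℝ) (hb : 0 < b) (hp : 0 ≤ p) (hp2 : p ≤ 1/2) :
    ∃ C : ℝ, 0 < C ∧ ∀ t : ℝ, 0 ≤ t →
      (∫ s in Set.Ioo (0 : ℝ) t,
        Real.exp (-(12 * b * (s ^ 2 * (t - s) / ((1 + s) * (1 + t))))) /
      (Real.sqrt (1 + s) * (t - s) ^ p)) ≤ C / (1 + t) ^ p := by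
  have i1 : IntegrableOn (fun x : ℝ => Real.exp (-b * x)) (Ioi 0) := by
    exact integrableOn_exp_mul_Ioi (by linarith) 0
  have i2 : IntegrableOn (fun x : ℝ => x ^ (-p) * Real.exp (-b * x)) (Ioi 0) := by
    simpa using integrableOn_rpow_mul_exp_neg_mul_rpow (p := 1) (s := -p) (b := b)
      (by linarith) one_pos hb
  set I1 := ∫ x in Ioi (0:ℝ), Real.exp (-b * x)
  set I2 := ∫ x in Ioi (0:ℝ), x ^ (-p) * Real.exp (-b * x)
  have n1 : 0 ≤ I1 := setIntegral_nonneg measurableSet_Ioi fun x _ => by positivity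
  have n2 : 0 ≤ I2 := setIntegral_nonneg measurableSet_Ioi fun x (hx : 0 < x) => by positivity
  refine ⟨2 * Real.exp (3 * b) * I1 + 2 * Real.exp b * I2 + 1, by positivity, fun t ht => ?_⟩
  have hQ : 0 < (1 + t) ^ (-p) := Real.rpow_pos_of_pos (by linarith) _
  have hsub : Ioo 0 t ⊆ Ioi (0:ℝ) := fun x hx => hx.1
  have j1 := i1.mono_set hsub
  have k2 : IntervalIntegrable (fun x : ℝ => x ^ (-p) * Real.exp (-b * x)) volume 0 t := by
    rw [intervalIntegrable_iff_integrableOn_Ioo_of_le ht]; exact i2.mono_set hsub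
  have j2 : IntegrableOn (fun s : ℝ => (t - s) ^ (-p) * Real.exp (-b * (t - s))) (Ioo 0 t) := by
    rw [← intervalIntegrable_iff_integrableOn_Ioo_of_le ht]
    have := (k2.comp_sub_left t).symm
    simpa using this
  have l1 : ∫ x in Ioo 0 t, Real.exp (-b * x) ≤ I1 :=
    setIntegral_mono_set i1 (ae_of_all _ fun x => (Real.exp_pos _).le) hsub.eventuallyLE
  have l2 : ∫ s in Ioo 0 t, (t - s) ^ (-p) * Real.exp (-b * (t - s)) ≤ I2 := by
    have e : ∫ s in Ioo 0 t, (t - s) ^ (-p) * Real.exp (-b * (t - s))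
        = ∫ x in Ioo 0 t, x ^ (-p) * Real.exp (-b * x) := by
      rw [← integral_Ioc_eq_integral_Ioo, ← integral_Ioc_eq_integral_Ioo,
        ← intervalIntegral.integral_of_le ht, ← intervalIntegral.integral_of_le ht]
      simpa using intervalIntegral.integral_comp_sub_left (a := 0) (b := t)
        (fun x : ℝ => x ^ (-p) * Real.exp (-b * x)) t
    rw [e]
    refine setIntegral_mono_set i2 ?_ hsub.eventuallyLE
    filter_upwards [ae_restrict_mem measurableSet_Ioi] with x hx
    have : (0:ℝ) < x := hx
    simp only [Pi.zero_apply]; positivity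
  calc _ ≤ ∫ s in Ioo 0 t, (1 + t) ^ (-p) * (2 * Real.exp (3 * b) * Real.exp (-b * s)
      + 2 * Real.exp b * ((t - s) ^ (-p) * Real.exp (-b * (t - s)))) := by
        refine integral_mono_of_nonneg ?_
          (((j1.const_mul _).add (j2.const_mul _)).const_mul _) ?_
        · filter_upwards [ae_restrict_mem measurableSet_Ioo] with s hs
          have : 0 < t - s := by linarith [hs.2]
          simp only [Pi.zero_apply]; positivity
        · filter_upwards [ae_restrict_mem measurableSet_Ioo] with s hs
          exact vd_pt b t s p hb hs.1 hs.2 hp hp2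
    _ = (1 + t) ^ (-p) * (2 * Real.exp (3 * b) * (∫ s in Ioo 0 t, Real.exp (-b * s))
      + 2 * Real.exp b * ∫ s in Ioo 0 t, ((t - s) ^ (-p) * Real.exp (-b * (t - s)))) := by
        rw [integral_const_mul, integral_add (j1.const_mul _) (j2.const_mul _),
          integral_const_mul, integral_const_mul]
    _ ≤ (1 + t) ^ (-p) * (2 * Real.exp (3 * b) * I1 + 2 * Real.exp b * I2 + 1) := by
        refine mul_le_mul_of_nonneg_left ?_ hQ.le
        have a1 := mul_le_mul_of_nonneg_left l1 (by positivity : 0 ≤ 2 * Real.exp (3 * b))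
        have a2 := mul_le_mul_of_nonneg_left l2 (by positivity : 0 ≤ 2 * Real.exp b)
        linarith
    _ = _ := by rw [Real.rpow_neg (by linarith), div_eq_mul_inv, mul_comm]

/-- Uniform temporal-decay bound for the velocity-difference exponential
(estimate (4.11) of the paper). -/
theorem velocity_difference_temporal_decay
    (M c₁ c₂ : ℝ) (hM : 0 < M) (hc : c₁ ≠ c₂) (j : ℕ) (hj : j = 0 ∨ j = 1) :
    ∃ C : ℝ, 0 < C ∧ ∀ t : ℝ, 0 ≤ t →
      (∫ s in Set.Ioo (0 : ℝ) t,
          Real.exp (-(s ^ 2 * (t - s) * (c₁ - c₂) ^ 2) /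
              (2 * M * (1 + s) * (1 + t))) /
            (Real.sqrt (1 + s) * (t - s) ^ ((j : ℝ) / 2))) ≤
        C / (1 + t) ^ ((j : ℝ) / 2) := by
  have hc' : 0 < (c₁ - c₂) ^ 2 := by
    have := sub_ne_zero.mpr hc
    positivity
  obtain ⟨C, hC, h⟩ := vd_main ((c₁ - c₂) ^ 2 / (24 * M)) ((j : ℝ) / 2) (by positivity)
    (by positivity) (by rcases hj with rfl | rfl <;> norm_num)
  refine ⟨C, hC, fun t ht => ?_⟩
  refine le_of_eq_of_le ?_ (h t ht)
  refine setIntegral_congr_fun measurableSet_Ioo fun s hs => ?_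
  have h1 : 0 < 1 + s := by linarith [hs.1]
  have h2 : 0 < 1 + t := by linarith
  have e : -(s ^ 2 * (t - s) * (c₁ - c₂) ^ 2) / (2 * M * (1 + s) * (1 + t)) =
      -(12 * ((c₁ - c₂) ^ 2 / (24 * M)) * (s ^ 2 * (t - s) / ((1 + s) * (1 + t)))) := by
    field_simp
    ring
  simp only [e]
end
end

section
/- Bound on the self-interaction convolution integral I_*. Let M > 0 and c ∈ ℝ. Then there exists a constant C > 0 such that for every x ∈ ℝ and every t ≥ 0: ∫_0^t ∫_ℝ exp( −(x−y+c(t−s))²/(M(t−s)) − (y+cs)²/(M(1+s)) ) / (1+s) · ( 1/((1+s)√(t−s)) + 1/(t−s) ) dy ds ≤ C e^{−(x+ct)²/(M(1+t))} / √(1+t). -/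
open MeasureTheory Set

noncomputable section

lemma inner_aux (M c x t s : ℝ) (hM : 0 < M) (hs : 0 < s) (hst : s < t) :
    (∫ y : ℝ,
          Real.exp (-(x - y + c * (t - s)) ^ 2 / (M * (t - s)) -
              (y + c * s) ^ 2 / (M * (1 + s))) / (1 + s) *
            (1 / ((1 + s) * Real.sqrt (t - s)) + 1 / (t - s))) =
      (Real.sqrt (Real.pi * M) * Real.exp (-(x + c * t) ^ 2 / (M * (1 + t))) / Real.sqrt (1 + t)) *
        (1 / ((1 + s) * Real.sqrt (1 + s)) + 1 / (Real.sqrt (1 + s) * Real.sqrt (t - s))) := by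
  have ha : 0 < t - s := by linarith
  have hb : 0 < 1 + s := by linarith
  have ht : 0 < 1 + t := by linarith
  have h1 : ∀ y : ℝ, Real.exp (-(x - y + c * (t - s)) ^ 2 / (M * (t - s)) -
              (y + c * s) ^ 2 / (M * (1 + s))) / (1 + s) *
            (1 / ((1 + s) * Real.sqrt (t - s)) + 1 / (t - s)) =
      (Real.exp (-(x + c * t) ^ 2 / (M * (1 + t))) / (1 + s) *
            (1 / ((1 + s) * Real.sqrt (t - s)) + 1 / (t - s))) *
        Real.exp (-((1 + t) / (M * (t - s) * (1 + s))) *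
          (y + (c * s - (x + c * t) * (1 + s) / (1 + t))) ^ 2) := by
    intro y
    have : -(x - y + c * (t - s)) ^ 2 / (M * (t - s)) - (y + c * s) ^ 2 / (M * (1 + s)) =
        -(x + c * t) ^ 2 / (M * (1 + t)) + -((1 + t) / (M * (t - s) * (1 + s))) *
          (y + (c * s - (x + c * t) * (1 + s) / (1 + t))) ^ 2 := by
      field_simp
      ring
    rw [this, Real.exp_add]
    ring
  simp_rw [h1]
  rw [integral_const_mul]
  rw [integral_add_right_eq_self (fun y : ℝ => Real.exp (-((1 + t) / (M * (t - s) * (1 + s))) * y ^ 2)),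
    integral_gaussian]
  have h2 : Real.pi / ((1 + t) / (M * (t - s) * (1 + s))) =
      (Real.pi * M) * ((t - s) * (1 + s)) / (1 + t) := by
    field_simp
  have hpm : 0 ≤ Real.pi * M := by positivity
  rw [h2, Real.sqrt_div (by positivity), Real.sqrt_mul hpm, Real.sqrt_mul ha.le]
  have qa := Real.sqrt_pos.2 ha
  have qb := Real.sqrt_pos.2 hb
  have qt := Real.sqrt_pos.2 ht
  have ea := Real.sq_sqrt ha.le
  have eb := Real.sq_sqrt hb.le
  generalize Real.sqrt (t - s) = A at *
  generalize Real.sqrt (1 + s) = B at *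
  rw [← ea, ← eb]
  field_simp

lemma outer_aux (t : ℝ) (h0 : 0 ≤ t) :
    (∫ s in Set.Ioo (0 : ℝ) t,
      (1 / ((1 + s) * Real.sqrt (1 + s)) + 1 / (Real.sqrt (1 + s) * Real.sqrt (t - s)))) ≤
      2 + Real.pi := by
  set F : ℝ → ℝ := fun s => -2 / Real.sqrt (1 + s) + Real.arcsin ((2 * s + 1 - t) / (1 + t)) with hF
  have ht : 0 < 1 + t := by linarith
  have hc : ContinuousOn F (Icc 0 t) := by
    apply ContinuousOn.add
    · apply ContinuousOn.div (by fun_prop) (by fun_prop)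
      intro s hs
      exact (Real.sqrt_pos.2 (by linarith [hs.1])).ne'
    · exact (Real.continuous_arcsin.comp (by fun_prop)).continuousOn
  have hd : ∀ s ∈ Ioo 0 t, HasDerivAt F (1 / ((1 + s) * Real.sqrt (1 + s)) +
      1 / (Real.sqrt (1 + s) * Real.sqrt (t - s))) s := by
    intro s hs
    have ha : 0 < t - s := by linarith [hs.2]
    have hb : 0 < 1 + s := by linarith [hs.1]
    have qa := Real.sqrt_pos.2 ha
    have qb := Real.sqrt_pos.2 hb
    have eb := Real.sq_sqrt hb.le
    apply HasDerivAt.add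
    · have d1 : HasDerivAt (fun s : ℝ => 1 + s) 1 s := (hasDerivAt_id s).const_add 1
      have d2 := (hasDerivAt_const s (-2 : ℝ)).div (d1.sqrt hb.ne') qb.ne'
      refine HasDerivAt.congr_deriv d2 ?_
      rw [eb]
      field_simp
      ring
    · have d1 : HasDerivAt (fun s : ℝ => (2 * s + 1 - t) / (1 + t)) (2 / (1 + t)) s := by
        have := ((((hasDerivAt_id s).const_mul 2).add_const 1).sub_const t).div_const (1 + t)
        simpa using this
      have hz1 : (2 * s + 1 - t) / (1 + t) ≠ -1 := by
        intro h
        rw [div_eq_iff ht.ne'] at h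
        linarith
      have hz2 : (2 * s + 1 - t) / (1 + t) ≠ 1 := by
        intro h
        rw [div_eq_iff ht.ne'] at h
        linarith
      have d2 := (Real.hasDerivAt_arcsin hz1 hz2).comp s d1
      refine HasDerivAt.congr_deriv d2 ?_
      have : 1 - ((2 * s + 1 - t) / (1 + t)) ^ 2 = (2 / (1 + t)) ^ 2 * ((1 + s) * (t - s)) := by
        field_simp
        ring
      rw [this, Real.sqrt_mul (by positivity), Real.sqrt_sq (by positivity), Real.sqrt_mul hb.le]
      field_simp
  have hi := intervalIntegral.integrableOn_deriv_of_nonneg hc hd (by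
    intro s hs
    have hb : 0 < 1 + s := by linarith [hs.1]
    positivity)
  have := intervalIntegral.integral_eq_sub_of_hasDerivAt_of_le h0 hc hd
    ((intervalIntegrable_iff_integrableOn_Ioc_of_le h0).2 hi)
  rw [intervalIntegral.integral_of_le h0, integral_Ioc_eq_integral_Ioo] at this
  rw [this, hF]
  have p1 := Real.arcsin_le_pi_div_two ((2 * t + 1 - t) / (1 + t))
  have p2 := Real.neg_pi_div_two_le_arcsin ((2 * 0 + 1 - t) / (1 + t))
  have p3 : -2 / Real.sqrt (1 + t) ≤ 0 := by
    rw [neg_div]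
    have : 0 ≤ 2 / Real.sqrt (1 + t) := by positivity
    linarith
  have p4 : -2 / Real.sqrt (1 + 0) = -2 := by simp
  simp only [p4]
  linarith

/-- Bound on the self-interaction convolution integral `I_*`
(estimate (4.8) of the paper). -/
theorem bound_self_interaction_integral
    (M c : ℝ) (hM : 0 < M) :
    ∃ C : ℝ, 0 < C ∧ ∀ x t : ℝ, 0 ≤ t →
      (∫ s in Set.Ioo (0 : ℝ) t, ∫ y : ℝ,
          Real.exp (-(x - y + c * (t - s)) ^ 2 / (M * (t - s)) -
              (y + c * s) ^ 2 / (M * (1 + s))) / (1 + s) *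
            (1 / ((1 + s) * Real.sqrt (t - s)) + 1 / (t - s))) ≤
        C * Real.exp (-(x + c * t) ^ 2 / (M * (1 + t))) / Real.sqrt (1 + t) := by
  have hpi := Real.pi_pos
  refine ⟨Real.sqrt (Real.pi * M) * (2 + Real.pi), by positivity, fun x t h0 => ?_⟩
  rw [setIntegral_congr_fun measurableSet_Ioo
    (fun s hs => inner_aux M c x t s hM hs.1 hs.2), integral_const_mul]
  calc _ ≤ (Real.sqrt (Real.pi * M) * Real.exp (-(x + c * t) ^ 2 / (M * (1 + t))) /
        Real.sqrt (1 + t)) * (2 + Real.pi) :=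
        mul_le_mul_of_nonneg_left (outer_aux t h0) (by positivity)
    _ = _ := by ring
end
end

section
/- Bound on the mix-term convolution integral I_j. Let M > 0, c₁, c₂ ∈ ℝ with c₁ ≠ c₂, and j ∈ {0,1}. Then there exists a constant C > 0 such that for every x ∈ ℝ and every t ≥ 0: ∫_0^t ∫_ℝ exp( −2(x−y+c₁(t−s))²/(M(t−s)) − (y+c₁s)²/(M(1+s)) − (y+c₂s)²/(M(1+s)) ) / ( (1+s)(t−s)^{(1+j)/2} ) dy ds ≤ C e^{−(x+c₁t)²/(M(1+t))} / (1+t)^{(1+j)/2}. -/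
open MeasureTheory Set

noncomputable section

def gmaj (c u : ℝ) : ℝ := Real.exp (-c * u) * (1 + u ^ (-(1/2) : ℝ))

lemma gmaj_int (c : ℝ) (hc : 0 < c) : IntegrableOn (gmaj c) (Ioi 0) := by
  have h1 : IntegrableOn (fun u : ℝ => Real.exp (-c * u)) (Ioi 0) := by
    simpa using integrableOn_exp_mul_Ioi (a := -c) (by linarith) 0
  have h2 := integrableOn_rpow_mul_exp_neg_mul_rpow (p := 1) (s := (-(1/2) : ℝ)) (b := c)
    (by norm_num) (by norm_num) hc
  refine (h1.add h2).congr_fun ?_ measurableSet_Ioi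
  intro u hu
  simp only [gmaj, Pi.add_apply, Real.rpow_one]
  ring

lemma gmaj_nonneg (c u : ℝ) (hu : 0 ≤ u) : 0 ≤ gmaj c u := by
  unfold gmaj; positivity

lemma gmaj_sum (c t : ℝ) (hc : 0 < c) (ht : 0 ≤ t) :
    IntegrableOn (fun s => gmaj c s + gmaj c (t - s)) (Ioo 0 t) ∧
    ∫ s in Ioo 0 t, (gmaj c s + gmaj c (t - s)) ≤ 2 * ∫ u in Ioi 0, gmaj c u := by
  have h0 : IntervalIntegrable (gmaj c) volume 0 t := by
    rw [intervalIntegrable_iff_integrableOn_Ioc_of_le ht]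
    exact (gmaj_int c hc).mono_set Ioc_subset_Ioi_self
  have h1 : IntervalIntegrable (fun s => gmaj c (t - s)) volume 0 t := by
    have := h0.comp_sub_left t
    simp only [sub_zero, sub_self] at this
    exact this.symm
  have h2 : ∫ s in (0:ℝ)..t, gmaj c s ≤ ∫ u in Ioi 0, gmaj c u := by
    rw [intervalIntegral.integral_of_le ht]
    refine setIntegral_mono_set (gmaj_int c hc) ?_ Ioc_subset_Ioi_self.eventuallyLE
    filter_upwards [ae_restrict_mem measurableSet_Ioi] with u hu
    exact gmaj_nonneg c u (le_of_lt hu)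
  constructor
  · have := h0.add h1
    rw [intervalIntegrable_iff_integrableOn_Ioc_of_le ht] at this
    exact this.mono_set Ioo_subset_Ioc_self
  · rw [← integral_Ioc_eq_integral_Ioo, ← intervalIntegral.integral_of_le ht,
      intervalIntegral.integral_add h0 h1, intervalIntegral.integral_comp_sub_left]
    simp only [sub_zero, sub_self]
    linarith

lemma inner_eq (M c₁ c₂ x t s D : ℝ) (hM : 0 < M) (hs : 0 < s) (hst : s < t) :
    (∫ y : ℝ, Real.exp (-(2 * (x - y + c₁ * (t - s)) ^ 2) / (M * (t - s)) -
              (y + c₁ * s) ^ 2 / (M * (1 + s)) - (y + c₂ * s) ^ 2 / (M * (1 + s))) / D)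
    = Real.exp (-(x + c₁ * t) ^ 2 / (M * (1 + t)) - (x + c₁ * t + (c₂ - c₁) * s) ^ 2 / (M * (1 + t))
        - (c₂ - c₁) ^ 2 / (2 * M) * (s ^ 2 * (t - s) / ((1 + s) * (1 + t)))) *
      (√(Real.pi * M / 2) * (√(t - s) * √(1 + s) / √(1 + t))) / D := by
  obtain ⟨τ, hτ⟩ : ∃ τ, τ = t - s := ⟨_, rfl⟩
  have hτ0 : 0 < τ := by linarith
  obtain rfl : t = s + τ := by linarith
  have e : s + τ - s = τ := by ring
  rw [e]
  set b := 2 / M * (1 + (s + τ)) / (τ * (1 + s)) with hb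
  set m := ((x + c₁ * (s + τ)) * (1 + s) - (c₂ - c₁) * s / 2 * τ) / (1 + (s + τ)) - c₁ * s with hm
  have hS : 0 < 1 + s := by linarith
  have hT : 0 < 1 + (s + τ) := by linarith
  have key : ∀ y : ℝ, -(2 * (x - y + c₁ * τ) ^ 2) / (M * τ) -
              (y + c₁ * s) ^ 2 / (M * (1 + s)) - (y + c₂ * s) ^ 2 / (M * (1 + s)) =
      (-(x + c₁ * (s + τ)) ^ 2 / (M * (1 + (s + τ))) - (x + c₁ * (s + τ) + (c₂ - c₁) * s) ^ 2 / (M * (1 + (s + τ)))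
        - (c₂ - c₁) ^ 2 / (2 * M) * (s ^ 2 * τ / ((1 + s) * (1 + (s + τ))))) + (-b * (y - m) ^ 2) := by
    intro y
    rw [hb, hm]
    field_simp
    ring
  simp_rw [key, Real.exp_add]
  rw [integral_div, integral_const_mul,
    integral_sub_right_eq_self (fun y => Real.exp (-b * y ^ 2)) m, integral_gaussian]
  congr 2
  rw [← Real.sqrt_mul hτ0.le, ← Real.sqrt_div (by positivity), ← Real.sqrt_mul (by positivity)]
  congr 1
  rw [hb]
  field_simp

lemma exp_bd (κ s t : ℝ) (hκ : 0 < κ) (hs : 0 < s) (hst : s < t) :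
    Real.exp (-(κ * (s ^ 2 * (t - s) / ((1 + s) * (1 + t))))) ≤
      Real.exp (κ / 4) * Real.exp (-(κ / 16) * min s (t - s)) := by
  rw [← Real.exp_add]
  apply Real.exp_le_exp.2
  suffices h : min s (t - s) / 16 - 1 / 4 ≤ s ^ 2 * (t - s) / ((1 + s) * (1 + t)) by
    nlinarith
  have hS : 0 < 1 + s := by linarith
  have hT : 0 < 1 + t := by linarith
  have hτ : 0 < t - s := by linarith
  have hnn : 0 ≤ s ^ 2 * (t - s) / ((1 + s) * (1 + t)) := by positivity
  rcases le_total t 1 with h1 | h1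
  · have : min s (t - s) ≤ 1 := (min_le_left _ _).trans (by linarith)
    linarith
  rcases le_total s (t - s) with h | h
  · rw [min_eq_left h]
    rcases le_total s 1 with h2 | h2
    · linarith
    · have a1 : s - 1 ≤ s ^ 2 / (1 + s) := by
        rw [le_div_iff₀ hS]; nlinarith
      have a2 : 1 / 4 ≤ (t - s) / (1 + t) := by
        rw [le_div_iff₀ hT]; nlinarith
      have : s ^ 2 * (t - s) / ((1 + s) * (1 + t)) = s ^ 2 / (1 + s) * ((t - s) / (1 + t)) := by
        field_simp
      rw [this]
      have := mul_le_mul a1 a2 (by norm_num) (by positivity)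
      linarith
  · rw [min_eq_right h]
    have a1 : 1 / 4 ≤ s / (1 + t) := by
      rw [le_div_iff₀ hT]; linarith
    have a2 : 1 / 4 ≤ s / (1 + s) := by
      rw [le_div_iff₀ hS]; linarith
    have : s ^ 2 * (t - s) / ((1 + s) * (1 + t)) = s / (1 + t) * (s / (1 + s)) * (t - s) := by
      field_simp
    rw [this]
    have := mul_le_mul a1 a2 (by norm_num) (by positivity)
    nlinarith

lemma weight_bd (s t : ℝ) (j : ℕ) (hj : j = 0 ∨ j = 1) (hs : 0 < s) (hst : s < t) :
    (√(t - s) * √(1 + s) / √(1 + t)) / ((1 + s) * (t - s) ^ ((1 + (j : ℝ)) / 2)) ≤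
      (1 + (min s (t - s)) ^ (-(1/2) : ℝ)) / (1 + t) ^ ((1 + (j : ℝ)) / 2) := by
  have hS : 0 < 1 + s := by linarith
  have hT : 0 < 1 + t := by linarith
  have hτ : 0 < t - s := by linarith
  have hm : 0 < min s (t - s) := lt_min hs hτ
  have hpos : 0 < (min s (t - s)) ^ (-(1/2) : ℝ) := by positivity
  have r1 := Real.sqrt_pos.2 hS
  have r2 := Real.sqrt_pos.2 hT
  have r3 := Real.sqrt_pos.2 hτ
  have q1 := Real.mul_self_sqrt hS.le
  have q2 := Real.mul_self_sqrt hT.le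
  have q3 := Real.mul_self_sqrt hτ.le
  have one_le : 1 ≤ √(1 + s) := Real.one_le_sqrt.2 (by linarith)
  rcases hj with rfl | rfl
  · norm_num only [Nat.cast_zero, add_zero]
    rw [← Real.sqrt_eq_rpow, ← Real.sqrt_eq_rpow]
    rw [div_div, div_le_div_iff₀ (by positivity) (by positivity)]
    have : √(t - s) * √(1 + s) * √(1 + t) ≤ √(1 + t) * ((1 + s) * √(t - s)) := by
      have := mul_le_mul_of_nonneg_left one_le (show 0 ≤ √(t - s) * √(1 + s) * √(1 + t) by positivity)
      have e : √(1 + t) * ((1 + s) * √(t - s)) = √(t - s) * √(1 + s) * √(1 + t) * √(1 + s) := by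
        linear_combination (-(√(1 + t) * √(t - s))) * q1
      linarith
    refine this.trans (le_mul_of_one_le_left (by positivity) ?_)
    norm_num at hpos ⊢
    linarith
  · have e : (1 + ((1 : ℕ) : ℝ)) / 2 = 1 := by norm_num
    rw [e, Real.rpow_one, Real.rpow_one]
    have h1 : (√(t - s)) ⁻¹ ≤ (min s (t - s)) ^ (-(1/2) : ℝ) := by
      rw [Real.rpow_neg hm.le, ← Real.sqrt_eq_rpow]
      exact inv_anti₀ (Real.sqrt_pos.2 hm) (Real.sqrt_le_sqrt (min_le_right _ _))
    have h2 : √(1 + t) ≤ √(1 + s) + √(t - s) := by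
      apply Real.sqrt_le_iff.2 ⟨by positivity, by nlinarith [mul_pos r1 r3]⟩
    have h3 : √(1 + t) / (√(1 + s) * √(t - s)) ≤ 1 + (min s (t - s)) ^ (-(1/2) : ℝ) := by
      calc _ ≤ (√(1 + s) + √(t - s)) / (√(1 + s) * √(t - s)) := by gcongr
        _ = (√(t - s))⁻¹ + (√(1 + s))⁻¹ := by field_simp
        _ ≤ _ := by
          have := inv_le_one_of_one_le₀ one_le
          linarith
    calc _ = √(1 + t) / (√(1 + s) * √(t - s)) / (1 + t) := by
          rw [div_div, div_div, div_eq_div_iff (by positivity) (by positivity)]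
          linear_combination (-(√(t - s) ^ 2 * √(1 + s) ^ 2)) * q2 +
            √(1 + t) ^ 2 * √(1 + s) ^ 2 * q3 + √(1 + t) ^ 2 * (t - s) * q1
      _ ≤ _ := by gcongr

/-- Bound on the mix-term convolution integral `I_j`
(estimate (4.13) of the paper). -/
theorem bound_mix_term_integral
    (M c₁ c₂ : ℝ) (hM : 0 < M) (hc : c₁ ≠ c₂) (j : ℕ) (hj : j = 0 ∨ j = 1) :
    ∃ C : ℝ, 0 < C ∧ ∀ x t : ℝ, 0 ≤ t →
      (∫ s in Set.Ioo (0 : ℝ) t, ∫ y : ℝ,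
          Real.exp (-(2 * (x - y + c₁ * (t - s)) ^ 2) / (M * (t - s)) -
              (y + c₁ * s) ^ 2 / (M * (1 + s)) - (y + c₂ * s) ^ 2 / (M * (1 + s))) /
            ((1 + s) * (t - s) ^ ((1 + (j : ℝ)) / 2))) ≤
        C * Real.exp (-(x + c₁ * t) ^ 2 / (M * (1 + t))) /
          (1 + t) ^ ((1 + (j : ℝ)) / 2) := by
  set κ := (c₂ - c₁) ^ 2 / (2 * M) with hκd
  have hd : c₂ - c₁ ≠ 0 := sub_ne_zero.2 hc.symm
  have hκ : 0 < κ := by positivity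
  set G := ∫ u in Ioi 0, gmaj (κ / 16) u with hG
  have hG0 : 0 ≤ G := setIntegral_nonneg measurableSet_Ioi
    (fun u hu => gmaj_nonneg _ u (le_of_lt hu))
  set K := √(Real.pi * M / 2) * Real.exp (κ / 4) with hK
  have hK0 : 0 < K := by positivity
  refine ⟨K * (2 * G) + 1, by positivity, ?_⟩
  intro x t ht
  set A := Real.exp (-(x + c₁ * t) ^ 2 / (M * (1 + t))) with hA
  set P := (1 + t) ^ ((1 + (j : ℝ)) / 2) with hP
  have hP0 : 0 < P := by positivity
  have hA0 : 0 < A := Real.exp_pos _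
  obtain ⟨i1, i2⟩ := gmaj_sum (κ / 16) t (by positivity) ht
  have step : ∀ s ∈ Ioo (0:ℝ) t, (∫ y : ℝ,
          Real.exp (-(2 * (x - y + c₁ * (t - s)) ^ 2) / (M * (t - s)) -
              (y + c₁ * s) ^ 2 / (M * (1 + s)) - (y + c₂ * s) ^ 2 / (M * (1 + s))) /
            ((1 + s) * (t - s) ^ ((1 + (j : ℝ)) / 2))) ≤
        K * A / P * (gmaj (κ / 16) s + gmaj (κ / 16) (t - s)) := by
    rintro s ⟨hs, hst⟩
    have hτ : 0 < t - s := by linarith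
    rw [inner_eq M c₁ c₂ x t s _ hM hs hst, ← hκd]
    have e1 : Real.exp (-(x + c₁ * t) ^ 2 / (M * (1 + t)) - (x + c₁ * t + (c₂ - c₁) * s) ^ 2 / (M * (1 + t))
        - κ * (s ^ 2 * (t - s) / ((1 + s) * (1 + t)))) ≤
        A * (Real.exp (κ / 4) * Real.exp (-(κ / 16) * min s (t - s))) := by
      refine le_trans ?_ (mul_le_mul_of_nonneg_left (exp_bd κ s t hκ hs hst) hA0.le)
      rw [hA, ← Real.exp_add]
      apply Real.exp_le_exp.2
      have : 0 ≤ (x + c₁ * t + (c₂ - c₁) * s) ^ 2 / (M * (1 + t)) := by positivity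
      linarith
    have e2 := weight_bd s t j hj hs hst
    have e3 : gmaj (κ / 16) (min s (t - s)) ≤ gmaj (κ / 16) s + gmaj (κ / 16) (t - s) := by
      have := gmaj_nonneg (κ / 16) s hs.le
      have := gmaj_nonneg (κ / 16) (t - s) hτ.le
      rcases min_choice s (t - s) with h | h <;> rw [h] <;> linarith
    have w0 : 0 ≤ (√(t - s) * √(1 + s) / √(1 + t)) / ((1 + s) * (t - s) ^ ((1 + (j : ℝ)) / 2)) := by
      positivity
    have e4 := mul_le_mul e1 e2 w0 (by positivity)
    have e5 := mul_le_mul_of_nonneg_left e4 (Real.sqrt_nonneg (Real.pi * M / 2))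
    refine le_trans (le_trans (le_of_eq ?_) e5) ?_
    · ring
    calc _ = K * A / P * gmaj (κ / 16) (min s (t - s)) := by
            rw [hK, gmaj]; ring
      _ ≤ _ := mul_le_mul_of_nonneg_left e3 (by positivity)
  calc _ ≤ ∫ s in Ioo (0:ℝ) t, K * A / P * (gmaj (κ / 16) s + gmaj (κ / 16) (t - s)) := by
        apply integral_mono_of_nonneg
        · filter_upwards [ae_restrict_mem measurableSet_Ioo] with s hs
          apply integral_nonneg
          intro y
          have h1 : 0 < s := hs.1
          have h2 : 0 < t - s := by linarith [hs.2]
          simp only [Pi.zero_apply]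
          positivity
        · exact i1.const_mul _
        · filter_upwards [ae_restrict_mem measurableSet_Ioo] with s hs
          exact step s hs
    _ = K * A / P * ∫ s in Ioo (0:ℝ) t, (gmaj (κ / 16) s + gmaj (κ / 16) (t - s)) :=
        integral_const_mul _ _
    _ ≤ K * A / P * (2 * G) := mul_le_mul_of_nonneg_left i2 (by positivity)
    _ = K * (2 * G) * A / P := by ring
    _ ≤ _ := by gcongr; linarith
end
end

section
/- Bound on the algebraically weighted mix-term convolution integral III_j. Let M > 0, c₁, c₂ ∈ ℝ, r ≥ 3 and j ∈ {0,1}. Then there exists a constant C > 0 such that for every x ∈ ℝ and every t ≥ 0: ∫_0^t ∫_ℝ exp( −4(x−y+c₁(t−s))²/(M(t−s)) ) / ( (1 + |y+c₁s| + √s)^r (1 + |y+c₂s| + √s)^r (t−s)^{(1+j)/2} ) dy ds ≤ C [ (1 + |x+c₁t| + √t)^{−r} + e^{−(x+c₁t)²/(M(1+t))}/√(1+t) ]. -/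
open MeasureTheory Set

noncomputable section

lemma aux_gauss (M τ z : ℝ) (hM : 0 < M) (hτ : 0 < τ) :
    Integrable (fun u : ℝ => Real.exp (-(4 * (z - u) ^ 2) / (M * τ))) ∧
    ∫ u : ℝ, Real.exp (-(4 * (z - u) ^ 2) / (M * τ)) = Real.sqrt (Real.pi * M / 4) * √τ := by
  have hb : 0 < 4 / (M * τ) := by positivity
  have e : (fun u : ℝ => Real.exp (-(4 * (z - u) ^ 2) / (M * τ)))
      = fun u => (fun v : ℝ => Real.exp (-(4 / (M * τ)) * v ^ 2)) (z - u) := by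
    funext u
    congr 1
    ring
  rw [e]
  refine ⟨(integrable_exp_neg_mul_sq hb).comp_sub_left z, ?_⟩
  rw [integral_sub_left_eq_self (fun v : ℝ => Real.exp (-(4 / (M * τ)) * v ^ 2)) volume z,
    integral_gaussian, ← Real.sqrt_mul (by positivity)]
  congr 1
  field_simp

lemma aux_pow (a r : ℝ) (ha : 1 ≤ a) (hr : 3 ≤ r) : a ^ 3 ≤ a ^ r := by
  have := Real.rpow_le_rpow_of_exponent_le ha hr
  have h3 : a ^ (3 : ℝ) = a ^ (3 : ℕ) := by
    rw [← Real.rpow_natCast]; norm_num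
  rwa [h3] at this

lemma aux_sqrt (s τ : ℝ) (hs : 0 < s) (hτ : 0 < τ) :
    √(1 + (s + τ)) ≤ √(1 + s) * (1 + √τ) := by
  rw [Real.sqrt_le_left (by positivity), mul_pow, Real.sq_sqrt (by positivity)]
  have := Real.sq_sqrt hτ.le
  have h0 := Real.sqrt_nonneg τ
  nlinarith [mul_pos hs hτ, mul_nonneg hs.le h0]

/-- pointwise facts on the weights -/
lemma aux_weight (r s u v : ℝ) (hr : 3 ≤ r) (hs : 0 < s) :
    (1 + s) ^ 2 * (1 + u ^ 2) ≤ (1 + |u| + √s) ^ r * (1 + |v| + √s) ^ r ∧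
    (1 + s) ^ 2 ≤ (1 + |u| + √s) ^ r * (1 + |v| + √s) ^ r ∧
    (1 + s) * √(1 + s) ≤ (1 + |v| + √s) ^ r := by
  have h0 := Real.sqrt_nonneg s
  have hu := abs_nonneg u
  have hv := abs_nonneg v
  have hsq := Real.sq_sqrt hs.le
  have hA := aux_pow (1 + |u| + √s) r (by linarith) hr
  have hB := aux_pow (1 + |v| + √s) r (by linarith) hr
  set w := √s with hw
  have hw2 : 1 + s ≤ (1 + w) ^ 2 := by nlinarith
  have hA1 : (1 + w) * (1 + u ^ 2) ≤ (1 + |u| + w) ^ r := by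
    refine le_trans ?_ hA
    have h1 : 1 + u ^ 2 ≤ (1 + |u| + w) ^ 2 := by
      have := sq_abs u
      nlinarith [mul_nonneg hu h0]
    calc (1 + w) * (1 + u ^ 2) ≤ (1 + |u| + w) * (1 + |u| + w) ^ 2 := by gcongr; linarith
      _ = _ := by ring
  have hB1 : (1 + w) ^ 3 ≤ (1 + |v| + w) ^ r := by
    refine le_trans ?_ hB
    gcongr
    linarith
  have main : (1 + s) ^ 2 * (1 + u ^ 2) ≤ (1 + |u| + w) ^ r * (1 + |v| + w) ^ r := by
    calc (1 + s) ^ 2 * (1 + u ^ 2) ≤ ((1 + w) ^ 2) ^ 2 * (1 + u ^ 2) := by gcongr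
      _ = ((1 + w) * (1 + u ^ 2)) * (1 + w) ^ 3 := by ring
      _ ≤ _ := by gcongr
  refine ⟨main, le_trans ?_ main, le_trans ?_ hB1⟩
  · nlinarith [sq_nonneg ((1 + s) * u)]
  · have : √(1 + s) ≤ 1 + w := by
      rw [Real.sqrt_le_left (by positivity)]; exact hw2
    calc (1 + s) * √(1 + s) ≤ (1 + w) ^ 2 * (1 + w) := by gcongr
      _ = _ := by ring

lemma aux_inner (M c r T : ℝ) (hM : 0 < M) (hr : 3 ≤ r) :
    ∃ C : ℝ, 0 < C ∧ ∀ z s τ : ℝ, 0 < s → 0 < τ →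
      (∫ u : ℝ, Real.exp (-(4 * (z - u) ^ 2) / (M * τ)) /
            ((1 + |u| + √s) ^ r * (1 + |u + c * s| + √s) ^ r * τ ^ T)) ≤
        C * ((1 + |z| + √(s + τ)) ^ (-r) +
          Real.exp (-z ^ 2 / (M * (1 + (s + τ)))) / √(1 + (s + τ))) *
          ((√τ / τ ^ T) / ((1 + s) * √(1 + s))) := by
  set k := Real.sqrt (Real.pi * M / 4) with hk
  have hk0 : 0 < k := by positivity
  have hpi := Real.pi_pos
  refine ⟨Real.exp (1 / M) * (k + Real.pi) + 4 ^ r * k + Real.pi * (1 + √M), by positivity, ?_⟩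
  intro z s τ hs hτ
  obtain ⟨gi, gv⟩ := aux_gauss M τ z hM hτ
  rw [← hk] at gv
  have hcau := integrable_inv_one_add_sq
  have hcauv := integral_univ_inv_one_add_sq
  have hsq := aux_sqrt s τ hs hτ
  have hst : 0 < √τ := Real.sqrt_pos.2 hτ
  have hss : 0 < √(1 + s) := Real.sqrt_pos.2 (by linarith)
  have hss2 : √(1 + s) ^ 2 = 1 + s := Real.sq_sqrt (by linarith)
  have hq : 0 < √(1 + (s + τ)) := Real.sqrt_pos.2 (by linarith)
  have hTp : 0 < τ ^ T := Real.rpow_pos_of_pos hτ T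
  set P := τ ^ T with hP
  set I := ∫ u : ℝ, Real.exp (-(4 * (z - u) ^ 2) / (M * τ)) /
            ((1 + |u| + √s) ^ r * (1 + |u + c * s| + √s) ^ r * P) with hI
  set Q := (√τ / P) / ((1 + s) * √(1 + s)) with hQ
  have hQ0 : 0 < Q := by positivity
  set Z := (1 + |z| + √(s + τ)) ^ (-r) with hZ
  have hZ0 : 0 < Z := by positivity
  set G := Real.exp (-z ^ 2 / (M * (1 + (s + τ)))) with hG
  have hG0 : 0 < G := Real.exp_pos _
  have hnn : ∀ u : ℝ, 0 ≤ Real.exp (-(4 * (z - u) ^ 2) / (M * τ)) /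
            ((1 + |u| + √s) ^ r * (1 + |u + c * s| + √s) ^ r * P) := by
    intro u; positivity
  rcases le_total (z ^ 2) (1 + (s + τ)) with hz | hz
  · -- case A
    have i1 : I ≤ Real.pi / ((1 + s) ^ 2 * P) := by
      calc I ≤ ∫ u : ℝ, (1 + u ^ 2)⁻¹ * (1 / ((1 + s) ^ 2 * P)) := by
            apply integral_mono_of_nonneg (Filter.Eventually.of_forall hnn) (hcau.mul_const _)
            refine Filter.Eventually.of_forall fun u => ?_
            have hw := (aux_weight r s u (u + c * s) hr hs).1
            have : (1 + u ^ 2)⁻¹ * (1 / ((1 + s) ^ 2 * P)) =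
              1 / (((1 + s) ^ 2 * (1 + u ^ 2)) * P) := by field_simp
            beta_reduce
            rw [this]
            gcongr
            rw [Real.exp_le_one_iff, neg_div]
            have : 0 ≤ 4 * (z - u) ^ 2 / (M * τ) := by positivity
            linarith
        _ = _ := by rw [integral_mul_const, hcauv]; ring
    have i2 : I ≤ k * √τ / ((1 + s) ^ 2 * P) := by
      calc I ≤ ∫ u : ℝ, Real.exp (-(4 * (z - u) ^ 2) / (M * τ)) * (1 / ((1 + s) ^ 2 * P)) := by
            apply integral_mono_of_nonneg (Filter.Eventually.of_forall hnn) (gi.mul_const _)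
            refine Filter.Eventually.of_forall fun u => ?_
            have hw := (aux_weight r s u (u + c * s) hr hs).2.1
            beta_reduce
            rw [mul_one_div]
            gcongr
        _ = _ := by rw [integral_mul_const, gv]; ring
    have hI0 : 0 ≤ I := integral_nonneg hnn
    have h1 : √(1 + (s + τ)) * I ≤ (k + Real.pi) * Q := by
      calc √(1 + (s + τ)) * I ≤ √(1 + s) * (1 + √τ) * I := by gcongr
        _ = √(1 + s) * (I + √τ * I) := by ring
        _ ≤ √(1 + s) * (k * √τ / ((1 + s) ^ 2 * P) + √τ * (Real.pi / ((1 + s) ^ 2 * P))) := by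
          gcongr
        _ = (k + Real.pi) * Q := by
          rw [hQ]; field_simp; rw [hss2]
    have hGe : 1 ≤ Real.exp (1 / M) * G := by
      rw [hG, ← Real.exp_add, Real.one_le_exp_iff]
      have : z ^ 2 / (M * (1 + (s + τ))) ≤ 1 / M := by
        rw [div_le_div_iff₀ (by positivity) hM]; nlinarith
      rw [neg_div]; linarith
    have h2 : I ≤ (k + Real.pi) * Q / √(1 + (s + τ)) := by
      rw [le_div_iff₀ hq]; linarith
    calc I ≤ 1 * ((k + Real.pi) * Q / √(1 + (s + τ))) := by linarith
      _ ≤ (Real.exp (1 / M) * G) * ((k + Real.pi) * Q / √(1 + (s + τ))) := by gcongr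
      _ = (Real.exp (1 / M) * (k + Real.pi)) * (0 + G / √(1 + (s + τ))) * Q := by ring
      _ ≤ _ := by
        gcongr
        have : 0 ≤ 4 ^ r * k + Real.pi * (1 + √M) := by positivity
        linarith
  · -- case B
    set a := 4 ^ r * Z / ((1 + s) * √(1 + s) * P) with ha
    set b := G * Real.exp (-(1 / (M * τ))) / ((1 + s) ^ 2 * P) with hb
    have ha0 : 0 < a := by positivity
    have hb0 : 0 < b := by positivity
    have i1 : I ≤ k * √τ * a + Real.pi * b := by
      calc I ≤ ∫ u : ℝ, (Real.exp (-(4 * (z - u) ^ 2) / (M * τ)) * a + (1 + u ^ 2)⁻¹ * b) := by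
            apply integral_mono_of_nonneg (Filter.Eventually.of_forall hnn)
              ((gi.mul_const _).add (hcau.mul_const _))
            refine Filter.Eventually.of_forall fun u => ?_
            obtain ⟨w1, w2, w3⟩ := aux_weight r s u (u + c * s) hr hs
            beta_reduce
            have hA0 : 0 < (1 + |u| + √s) := by positivity
            rcases le_total (|z| / 2) |u| with hu | hu
            · refine le_trans ?_ (le_add_of_nonneg_right (by positivity))
              have hzt : √(s + τ) ≤ |z| := by
                rw [← Real.sqrt_sq_eq_abs]
                exact Real.sqrt_le_sqrt (by linarith)
              have hAZ : (4 : ℝ) ^ (-r) * (1 + |z| + √(s + τ)) ^ r ≤ (1 + |u| + √s) ^ r := by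
                rw [Real.rpow_neg (by norm_num), ← Real.inv_rpow (by norm_num),
                  ← Real.mul_rpow (by norm_num) (by positivity)]
                apply Real.rpow_le_rpow (by positivity) _ (by linarith)
                have := Real.sqrt_nonneg s
                have := abs_nonneg z
                linarith
              have e : a = 1 / ((4 : ℝ) ^ (-r) * (1 + |z| + √(s + τ)) ^ r *
                  ((1 + s) * √(1 + s)) * P) := by
                rw [ha, hZ, Real.rpow_neg (by positivity), Real.rpow_neg (by positivity)]
                field_simp
              rw [e]
              beta_reduce
              rw [mul_one_div]
              gcongr
            · refine le_trans ?_ (le_add_of_nonneg_left (by positivity))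
              have hE : Real.exp (-(4 * (z - u) ^ 2) / (M * τ)) ≤
                  G * Real.exp (-(1 / (M * τ))) := by
                rw [hG, ← Real.exp_add, Real.exp_le_exp]
                have hzu : z ^ 2 ≤ 4 * (z - u) ^ 2 := by
                  have h1 : |z| / 2 ≤ |z - u| := by
                    have := abs_sub_abs_le_abs_sub z u
                    linarith
                  have h2 : (|z| / 2) ^ 2 ≤ |z - u| ^ 2 := by gcongr
                  rw [sq_abs, div_pow, sq_abs] at h2
                  linarith
                have h3 : z ^ 2 / (M * (1 + (s + τ))) + 1 / (M * τ) ≤ z ^ 2 / (M * τ) := by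
                  rw [div_add_div _ _ (by positivity) (by positivity),
                    div_le_div_iff₀ (by positivity) (by positivity)]
                  have : 0 ≤ (M * M * (M * τ)) * ((z ^ 2 - (1 + (s + τ))) + s * z ^ 2) := by
                    have : 0 ≤ s * z ^ 2 := by positivity
                    apply mul_nonneg (by positivity)
                    linarith
                  have h4 : 0 ≤ (M * (M * τ)) * ((z ^ 2 - (1 + (s + τ))) + s * z ^ 2) := by
                    have : 0 ≤ s * z ^ 2 := by positivity
                    apply mul_nonneg (by positivity)
                    linarith
                  linarith
                have h4 : z ^ 2 / (M * τ) ≤ 4 * (z - u) ^ 2 / (M * τ) := by gcongr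
                rw [neg_div, neg_div]
                linarith
              have e : (1 + u ^ 2)⁻¹ * b = G * Real.exp (-(1 / (M * τ))) /
                  ((1 + s) ^ 2 * (1 + u ^ 2) * P) := by
                rw [hb]; field_simp
              beta_reduce
              rw [e]
              gcongr
        _ = _ := by
          rw [integral_add (gi.mul_const _) (hcau.mul_const _), integral_mul_const,
            integral_mul_const, gv, hcauv]
    have e1 : k * √τ * a = (4 ^ r * k) * Z * Q := by
      rw [ha, hQ]; field_simp
    have e2 : b ≤ (1 + √M) * (G / √(1 + (s + τ))) * Q := by
      have hx1 : Real.exp (-(1 / (M * τ))) ≤ 1 := by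
        rw [Real.exp_le_one_iff]
        have : 0 < 1 / (M * τ) := by positivity
        linarith
      have hx2 : Real.exp (-(1 / (M * τ))) ≤ √M * √τ := by
        rw [Real.exp_neg, ← Real.sqrt_mul hM.le]
        have h := Real.add_one_le_exp (1 / (M * τ))
        have hMt : 0 < √(M * τ) := by positivity
        have hMs : √(M * τ) ^ 2 = M * τ := Real.sq_sqrt (by positivity)
        rw [inv_le_comm₀ (Real.exp_pos _) hMt]
        refine le_trans ?_ h
        have : 1 / (M * τ) = (√(M * τ))⁻¹ ^ 2 := by rw [inv_pow, one_div, hMs]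
        rw [this]
        nlinarith [sq_nonneg ((√(M * τ))⁻¹ - 1), inv_pos.2 hMt]
      have key : √(1 + (s + τ)) * Real.exp (-(1 / (M * τ))) ≤ √(1 + s) * ((1 + √M) * √τ) := by
        calc √(1 + (s + τ)) * Real.exp (-(1 / (M * τ)))
            ≤ √(1 + s) * (1 + √τ) * Real.exp (-(1 / (M * τ))) := by gcongr
          _ = √(1 + s) * (Real.exp (-(1 / (M * τ))) + √τ * Real.exp (-(1 / (M * τ)))) := by ring
          _ ≤ √(1 + s) * (√M * √τ + √τ * 1) := by gcongr
          _ = _ := by ring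
      calc b = (G / ((1 + s) ^ 2 * P) / √(1 + (s + τ))) *
            (√(1 + (s + τ)) * Real.exp (-(1 / (M * τ)))) := by rw [hb]; field_simp
        _ ≤ (G / ((1 + s) ^ 2 * P) / √(1 + (s + τ))) * (√(1 + s) * ((1 + √M) * √τ)) := by
          gcongr
        _ = _ := by rw [hQ]; field_simp; rw [hss2]
    set H := G / √(1 + (s + τ)) with hH
    have hH0 : 0 < H := by positivity
    calc I ≤ (4 ^ r * k) * Z * Q + Real.pi * ((1 + √M) * H * Q) := by
          rw [← e1]; refine i1.trans ?_; gcongr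
      _ ≤ _ := by
        have t1 : 0 ≤ Real.exp (1 / M) * (k + Real.pi) * (Z + H) * Q := by positivity
        have t2 : 0 ≤ 4 ^ r * k * H * Q := by positivity
        have t3 : 0 ≤ Real.pi * (1 + √M) * Z * Q := by positivity
        linarith

/-- Bound on the algebraically weighted mix-term convolution integral `III_j`
(estimate (4.16) of the paper). -/
theorem bound_algebraic_mix_term_integral
    (M c₁ c₂ r : ℝ) (hM : 0 < M) (hr : 3 ≤ r) (j : ℕ) (hj : j = 0 ∨ j = 1) :
    ∃ C : ℝ, 0 < C ∧ ∀ x t : ℝ, 0 ≤ t →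
      (∫ s in Set.Ioo (0 : ℝ) t, ∫ y : ℝ,
          Real.exp (-(4 * (x - y + c₁ * (t - s)) ^ 2) / (M * (t - s))) /
            ((1 + |y + c₁ * s| + Real.sqrt s) ^ r *
              (1 + |y + c₂ * s| + Real.sqrt s) ^ r *
              (t - s) ^ ((1 + (j : ℝ)) / 2))) ≤
        C * ((1 + |x + c₁ * t| + Real.sqrt t) ^ (-r) +
          Real.exp (-(x + c₁ * t) ^ 2 / (M * (1 + t))) / Real.sqrt (1 + t)) := by
  obtain ⟨C, hC, hin⟩ := aux_inner M (c₂ - c₁) r ((1 + (j : ℝ)) / 2) hM hr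
  set κ : ℝ → ℝ := (Ioo (0 : ℝ) 1).indicator (fun v => v ^ (-(1 / 2) : ℝ)) with hκ
  have hκi : Integrable κ := by
    rw [hκ, integrable_indicator_iff measurableSet_Ioo]
    exact (intervalIntegral.integrableOn_Ioo_rpow_iff (by norm_num)).2 (by norm_num)
  have hκ0 : ∀ v, 0 ≤ κ v := by
    intro v
    apply indicator_nonneg
    intro v hv
    exact Real.rpow_nonneg hv.1.le _
  have hdi : IntegrableOn (fun s : ℝ => (s + 1) ^ (-(3 / 2) : ℝ)) (Ioi 0) :=
    integrableOn_add_rpow_Ioi_of_lt (by norm_num) (by norm_num)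
  have hd0 : ∀ s ∈ Ioi (0 : ℝ), 0 ≤ (s + 1) ^ (-(3 / 2) : ℝ) := by
    intro s hs
    have : (0 : ℝ) < s := hs
    positivity
  set K := (∫ s in Ioi (0 : ℝ), (s + 1) ^ (-(3 / 2) : ℝ)) + ∫ v, κ v with hK
  have hK0 : 0 ≤ K := add_nonneg (setIntegral_nonneg measurableSet_Ioi hd0) (integral_nonneg hκ0)
  refine ⟨C * (K + 1), by positivity, ?_⟩
  intro x t ht
  set R := (1 + |x + c₁ * t| + Real.sqrt t) ^ (-r) +
          Real.exp (-(x + c₁ * t) ^ 2 / (M * (1 + t))) / Real.sqrt (1 + t) with hR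
  have hR0 : 0 < R := by positivity
  have hdi' : IntegrableOn (fun s : ℝ => (s + 1) ^ (-(3 / 2) : ℝ)) (Ioo 0 t) :=
    hdi.mono_set Ioo_subset_Ioi_self
  have hκi' : Integrable (fun s => κ (t - s)) := hκi.comp_sub_left t
  have hint : IntegrableOn (fun s : ℝ => C * R * ((s + 1) ^ (-(3 / 2) : ℝ) + κ (t - s)))
      (Ioo 0 t) := (hdi'.add hκi'.integrableOn).const_mul _
  have hpt : ∀ s ∈ Ioo (0 : ℝ) t, (∫ y : ℝ,
          Real.exp (-(4 * (x - y + c₁ * (t - s)) ^ 2) / (M * (t - s))) /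
            ((1 + |y + c₁ * s| + Real.sqrt s) ^ r *
              (1 + |y + c₂ * s| + Real.sqrt s) ^ r *
              (t - s) ^ ((1 + (j : ℝ)) / 2))) ≤
          C * R * ((s + 1) ^ (-(3 / 2) : ℝ) + κ (t - s)) := by
    intro s hs
    have hs0 : 0 < s := hs.1
    have hτ : 0 < t - s := sub_pos.2 hs.2
    have h := hin (x + c₁ * t) s (t - s) hs0 hτ
    rw [← integral_add_right_eq_self _ (c₁ * s), show s + (t - s) = t by ring, ← hR] at h
    refine le_trans (le_of_eq ?_) (h.trans ?_)
    · congr 1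
      funext y
      congr 2
      · congr 2; ring
      · congr 4; ring_nf
    · gcongr
      have hD : (s + 1) ^ (-(3 / 2) : ℝ) = 1 / ((1 + s) * √(1 + s)) := by
        rw [Real.rpow_neg (by positivity), show (3 / 2 : ℝ) = 1 + 1 / 2 by norm_num,
          Real.rpow_add (by positivity), Real.rpow_one, ← Real.sqrt_eq_rpow, one_div, add_comm s 1]
      have hD1 : 1 / ((1 + s) * √(1 + s)) ≤ 1 := by
        have : 1 ≤ √(1 + s) := Real.one_le_sqrt.2 (by linarith)
        rw [div_le_one (by positivity)]
        nlinarith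
      have hQ : √(t - s) / (t - s) ^ ((1 + (j : ℝ)) / 2) ≤ 1 + κ (t - s) := by
        have e : √(t - s) / (t - s) ^ ((1 + (j : ℝ)) / 2) = (t - s) ^ (-((j : ℝ) / 2)) := by
          rw [Real.sqrt_eq_rpow, ← Real.rpow_sub hτ]; congr 1; ring
        rw [e]
        rcases hj with rfl | rfl
        · simp [hκ0]
        · by_cases h1 : t - s < 1
          · have : κ (t - s) = (t - s) ^ (-(1 / 2) : ℝ) := indicator_of_mem (show t - s ∈ Ioo (0 : ℝ) 1 from ⟨hτ, h1⟩) _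
            rw [this]; push_cast; linarith
          · have : (t - s) ^ (-(((1 : ℕ) : ℝ) / 2)) ≤ 1 :=
              Real.rpow_le_one_of_one_le_of_nonpos (not_lt.1 h1) (by norm_num)
            linarith [hκ0 (t - s)]
      rw [hD, div_eq_mul_one_div]
      have hD0 : 0 ≤ 1 / ((1 + s) * √(1 + s)) := by positivity
      nlinarith [hκ0 (t - s), mul_le_mul_of_nonneg_right hQ hD0,
        mul_le_mul_of_nonneg_left hD1 (hκ0 (t - s))]
  calc _ ≤ ∫ s in Ioo (0 : ℝ) t, C * R * ((s + 1) ^ (-(3 / 2) : ℝ) + κ (t - s)) := by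
        apply integral_mono_of_nonneg _ hint
        · exact (ae_restrict_iff' measurableSet_Ioo).2 (Filter.Eventually.of_forall hpt)
        · refine (ae_restrict_iff' measurableSet_Ioo).2 (Filter.Eventually.of_forall ?_)
          intro s hs
          have hτ : 0 < t - s := sub_pos.2 hs.2
          apply integral_nonneg
          intro y
          positivity
    _ = C * R * ((∫ s in Ioo (0 : ℝ) t, (s + 1) ^ (-(3 / 2) : ℝ)) +
          ∫ s in Ioo (0 : ℝ) t, κ (t - s)) := by
        rw [integral_const_mul, integral_add hdi' hκi'.integrableOn]
    _ ≤ C * R * K := by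
        rw [hK]
        refine mul_le_mul_of_nonneg_left (add_le_add ?_ ?_) (by positivity)
        · exact setIntegral_mono_set hdi
            ((ae_restrict_iff' measurableSet_Ioi).2 (Filter.Eventually.of_forall hd0))
            (Filter.Eventually.of_forall Ioo_subset_Ioi_self)
        · rw [← integral_sub_left_eq_self κ volume t]
          exact setIntegral_le_integral hκi' (Filter.Eventually.of_forall fun s => hκ0 _)
    _ ≤ C * (K + 1) * R := by nlinarith [mul_pos hC hR0]
end
end
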